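/- arXiv:1607.03183 — 4 statements merged into one kernel-verified Lean document; each statement's English description precedes it below -/
import Mathlib

section
/- Let n ≥ 1 and 1 ≤ k ≤ n. The augmented mean-field pseudo-entropy functional H_{aMF,k}, defined on probability distributions μ on {-1,1}^n by H_{aMF,k}(μ) = min over S ⊆ Fin n with |S| ≤ k of [ H(μ_S) + Σ_{i ∉ S} H(μ_i | μ_S) ], is concave: for distributions μ¹, μ² on {-1,1}^n and λ ∈ [0,1], H_{aMF,k}(λμ¹ + (1−λ)μ²) ≥ λ·H_{aMF,k}(μ¹) + (1−λ)·H_{aMF,k}(μ²). -/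
open scoped BigOperators

noncomputable section

/-- The set `{-1, 1}` of spin values. -/
abbrev B : Finset ℝ := {-1, 1}

/-- The discrete cube `{-1,1}^n`. -/
abbrev Cube (n : ℕ) := Fin n → ↥B

/-- Assignments of spin values to the coordinates in `S`. -/
abbrev Asg {n : ℕ} (S : Finset (Fin n)) := ↥S → ↥B

/-- Shannon entropy (in nats), with the convention `0 * log 0 = 0`. -/
def ent {D : Type*} [Fintype D] (p : D → ℝ) : ℝ := -∑ d, p d * Real.log (p d)

/-- Restriction of `x ∈ {-1,1}^n` to the coordinates in `S`. -/
def restr {n : ℕ} (S : Finset (Fin n)) (x : Cube n) : Asg S := fun i => x i.1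

/-- Marginal distribution of `μ` on the coordinates in `S`. -/
def margS {n : ℕ} (μ : Cube n → ℝ) (S : Finset (Fin n)) (y : Asg S) : ℝ :=
  ∑ x : Cube n, if restr S x = y then μ x else 0

/-- Conditional entropy `H(μ_i | μ_S)` of coordinate `i` given the coordinates in `S`:
`Σ_{x_S} μ_S(x_S) · H(μ_{i | x_S})`, where `μ_{i | x_S}(a) = μ_{S∪{i}}(x_S, a)/μ_S(x_S)`
(terms with `μ_S(x_S) = 0` contribute `0`). -/
def condEntD {n : ℕ} (μ : Cube n → ℝ) (S : Finset (Fin n)) (i : Fin n) : ℝ :=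
  ∑ y : Asg S, margS μ S y *
    ent (fun a : ↥B =>
      (∑ x : Cube n, if restr S x = y ∧ x i = a then μ x else 0) / margS μ S y)

/-- The augmented mean-field pseudo-entropy functional `H_{aMF,k}(μ)`:
the minimum over `S ⊆ Fin n`, `|S| ≤ k`, of `H(μ_S) + Σ_{i ∉ S} H(μ_i | μ_S)`. -/
def aMF {n : ℕ} (μ : Cube n → ℝ) (k : ℕ) : ℝ :=
  (Finset.univ.filter (fun S : Finset (Fin n) => S.card ≤ k)).inf'
    ⟨∅, Finset.mem_filter.mpr ⟨Finset.mem_univ _, by simp⟩⟩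
    (fun S => ent (margS μ S) + ∑ i ∈ Sᶜ, condEntD μ S i)

theorem persp_aux (l m₁ m₂ p₁ p₂ : ℝ) (hl0 : 0 ≤ l) (hl1 : 0 ≤ 1 - l)
    (hp₁ : 0 ≤ p₁) (hp₂ : 0 ≤ p₂) (h₁ : p₁ ≤ m₁) (h₂ : p₂ ≤ m₂) :
    l * (m₁ * Real.negMulLog (p₁ / m₁)) + (1 - l) * (m₂ * Real.negMulLog (p₂ / m₂)) ≤
      (l * m₁ + (1 - l) * m₂) *
        Real.negMulLog ((l * p₁ + (1 - l) * p₂) / (l * m₁ + (1 - l) * m₂)) := by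
  have hm₁ : 0 ≤ m₁ := hp₁.trans h₁
  have hm₂ : 0 ≤ m₂ := hp₂.trans h₂
  have ha : 0 ≤ l * m₁ := mul_nonneg hl0 hm₁
  have hb : 0 ≤ (1 - l) * m₂ := mul_nonneg hl1 hm₂
  rcases (add_nonneg ha hb).eq_or_lt with h | h
  · have ha' : l * m₁ = 0 := by linarith
    have hb' : (1 - l) * m₂ = 0 := by linarith
    rw [← mul_assoc, ← mul_assoc, ha', hb']
    simp
  · set m := l * m₁ + (1 - l) * m₂ with hm
    have key := Real.concaveOn_negMulLog.2
      (show p₁ / m₁ ∈ Set.Ici (0 : ℝ) from div_nonneg hp₁ hm₁)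
      (show p₂ / m₂ ∈ Set.Ici (0 : ℝ) from div_nonneg hp₂ hm₂)
      (div_nonneg ha h.le) (div_nonneg hb h.le)
      (by rw [← add_div, ← hm]; exact div_self h.ne')
    simp only [smul_eq_mul] at key
    have e₁ : m₁ * (p₁ / m₁) = p₁ := by
      rcases eq_or_ne m₁ 0 with h0 | h0
      · rw [h0] at h₁ ⊢; linarith
      · field_simp
    have e₂ : m₂ * (p₂ / m₂) = p₂ := by
      rcases eq_or_ne m₂ 0 with h0 | h0
      · rw [h0] at h₂ ⊢; linarith
      · field_simp
    have e : l * m₁ / m * (p₁ / m₁) + (1 - l) * m₂ / m * (p₂ / m₂)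
        = (l * p₁ + (1 - l) * p₂) / m := by
      calc _ = (l * (m₁ * (p₁ / m₁)) + (1 - l) * (m₂ * (p₂ / m₂))) / m := by ring
        _ = _ := by rw [e₁, e₂]
    rw [e] at key
    have := mul_le_mul_of_nonneg_left key h.le
    refine le_trans (le_of_eq ?_) this
    field_simp

theorem ent_eq_aux {D : Type*} [Fintype D] (p : D → ℝ) :
    ent p = ∑ d, Real.negMulLog (p d) := by
  simp [ent, Real.negMulLog]

theorem sum_mix_aux {n : ℕ} (μ₁ μ₂ : Cube n → ℝ) (l : ℝ) (P : Cube n → Prop)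
    [DecidablePred P] :
    (∑ x, if P x then l * μ₁ x + (1 - l) * μ₂ x else 0) =
      l * (∑ x, if P x then μ₁ x else 0) + (1 - l) * (∑ x, if P x then μ₂ x else 0) := by
  rw [Finset.mul_sum, Finset.mul_sum, ← Finset.sum_add_distrib]
  refine Finset.sum_congr rfl fun x _ => ?_
  split_ifs <;> simp

theorem sum_nonneg_aux {n : ℕ} (μ : Cube n → ℝ) (h : ∀ x, 0 ≤ μ x) (P : Cube n → Prop)
    [DecidablePred P] : 0 ≤ ∑ x, if P x then μ x else 0 :=
  Finset.sum_nonneg fun x _ => by split_ifs; exacts [h x, le_rfl]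

theorem sum_le_aux {n : ℕ} (μ : Cube n → ℝ) (h : ∀ x, 0 ≤ μ x) (P Q : Cube n → Prop)
    [DecidablePred P] [DecidablePred Q] :
    (∑ x, if P x ∧ Q x then μ x else 0) ≤ ∑ x, if P x then μ x else 0 :=
  Finset.sum_le_sum fun x _ => by
    by_cases hP : P x <;> by_cases hQ : Q x <;> simp [hP, hQ, h x]

theorem ent_marg_aux {n : ℕ} (μ₁ μ₂ : Cube n → ℝ) (h₁ : ∀ x, 0 ≤ μ₁ x) (h₂ : ∀ x, 0 ≤ μ₂ x)
    (l : ℝ) (hl0 : 0 ≤ l) (hl1 : 0 ≤ 1 - l) (S : Finset (Fin n)) :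
    l * ent (margS μ₁ S) + (1 - l) * ent (margS μ₂ S) ≤
      ent (margS (fun x => l * μ₁ x + (1 - l) * μ₂ x) S) := by
  rw [ent_eq_aux, ent_eq_aux, ent_eq_aux, Finset.mul_sum, Finset.mul_sum,
    ← Finset.sum_add_distrib]
  refine Finset.sum_le_sum fun y _ => ?_
  have e : margS (fun x => l * μ₁ x + (1 - l) * μ₂ x) S y
      = l * margS μ₁ S y + (1 - l) * margS μ₂ S y := sum_mix_aux μ₁ μ₂ l _
  rw [e]
  exact Real.concaveOn_negMulLog.2
    (show margS μ₁ S y ∈ Set.Ici (0 : ℝ) from sum_nonneg_aux μ₁ h₁ _)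
    (show margS μ₂ S y ∈ Set.Ici (0 : ℝ) from sum_nonneg_aux μ₂ h₂ _) hl0 hl1 (by ring)

theorem condEnt_aux {n : ℕ} (μ₁ μ₂ : Cube n → ℝ) (h₁ : ∀ x, 0 ≤ μ₁ x) (h₂ : ∀ x, 0 ≤ μ₂ x)
    (l : ℝ) (hl0 : 0 ≤ l) (hl1 : 0 ≤ 1 - l) (S : Finset (Fin n)) (i : Fin n) :
    l * condEntD μ₁ S i + (1 - l) * condEntD μ₂ S i ≤
      condEntD (fun x => l * μ₁ x + (1 - l) * μ₂ x) S i := by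
  unfold condEntD
  rw [Finset.mul_sum, Finset.mul_sum, ← Finset.sum_add_distrib]
  refine Finset.sum_le_sum fun y _ => ?_
  have e : margS (fun x => l * μ₁ x + (1 - l) * μ₂ x) S y
      = l * margS μ₁ S y + (1 - l) * margS μ₂ S y := sum_mix_aux μ₁ μ₂ l _
  rw [e, ent_eq_aux, ent_eq_aux, ent_eq_aux]
  simp only [Finset.mul_sum (s := (Finset.univ : Finset ↥B))]
  rw [← Finset.sum_add_distrib]
  refine Finset.sum_le_sum fun a _ => ?_
  rw [sum_mix_aux μ₁ μ₂ l (fun x => restr S x = y ∧ x i = a)]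
  exact persp_aux l _ _ _ _ hl0 hl1 (sum_nonneg_aux μ₁ h₁ _) (sum_nonneg_aux μ₂ h₂ _)
    (sum_le_aux μ₁ h₁ _ _) (sum_le_aux μ₂ h₂ _ _)

/-- Concavity of the augmented mean-field pseudo-entropy functional `H_{aMF,k}`:
for distributions `μ¹, μ²` on `{-1,1}^n` and `λ ∈ [0,1]`,
`H_{aMF,k}(λμ¹ + (1−λ)μ²) ≥ λ·H_{aMF,k}(μ¹) + (1−λ)·H_{aMF,k}(μ²)`. -/
theorem augMeanField_concave (n k : ℕ) (hn : 1 ≤ n) (hk1 : 1 ≤ k) (hkn : k ≤ n)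
    (μ₁ μ₂ : Cube n → ℝ)
    (hμ₁0 : ∀ x, 0 ≤ μ₁ x) (hμ₁1 : ∑ x : Cube n, μ₁ x = 1)
    (hμ₂0 : ∀ x, 0 ≤ μ₂ x) (hμ₂1 : ∑ x : Cube n, μ₂ x = 1)
    (lam : ℝ) (hlam : lam ∈ Set.Icc (0 : ℝ) 1) :
    lam * aMF μ₁ k + (1 - lam) * aMF μ₂ k
      ≤ aMF (fun x => lam * μ₁ x + (1 - lam) * μ₂ x) k := by
  obtain ⟨hl0, hl1⟩ := hlam
  have hl1' : 0 ≤ 1 - lam := by linarith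
  conv_rhs => unfold aMF
  refine Finset.le_inf' _ _ fun S hS => ?_
  have b₁ : aMF μ₁ k ≤ ent (margS μ₁ S) + ∑ i ∈ Sᶜ, condEntD μ₁ S i :=
    Finset.inf'_le _ hS
  have b₂ : aMF μ₂ k ≤ ent (margS μ₂ S) + ∑ i ∈ Sᶜ, condEntD μ₂ S i :=
    Finset.inf'_le _ hS
  have c₁ := mul_le_mul_of_nonneg_left b₁ hl0
  have c₂ := mul_le_mul_of_nonneg_left b₂ hl1'
  have d := ent_marg_aux μ₁ μ₂ hμ₁0 hμ₂0 lam hl0 hl1' S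
  have f := Finset.sum_le_sum (s := Sᶜ) fun i _ =>
    condEnt_aux μ₁ μ₂ hμ₁0 hμ₂0 lam hl0 hl1' S i
  rw [Finset.sum_add_distrib, ← Finset.mul_sum, ← Finset.mul_sum] at f
  rw [mul_add] at c₁ c₂
  linarith
end
end

section
/- (Entropy of the correlation-rounded distribution.) Let n ≥ 1, let k ≥ 2, let (μ_S) be an SA(k)-consistent family on Fin n, and let S ⊆ Fin n with |S| ≤ k−1. Define μ̃ on {-1,1}^n by μ̃(x) = μ_S(x_S) · Π_{i ∉ S} [ μ_{S∪{i}}(x_S, x_i) / μ_S(x_S) ], with the convention that μ̃(x) = 0 when μ_S(x_S) = 0. Then μ̃ is a probability distribution on {-1,1}^n, its marginal on S is μ_S, and H(μ̃) = H(μ_S) + Σ_{i ∉ S} H(μ_i | μ_S). -/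
open scoped BigOperators

noncomputable section

/-- Restriction of an assignment on `S` to a subset `R ⊆ S`. -/
def res {n : ℕ} {R S : Finset (Fin n)} (h : R ⊆ S) (y : Asg S) : Asg R :=
  fun i => y ⟨i.1, h i.2⟩

/-- The marginal on `R ⊆ S` of a local distribution on assignments to `S`. -/
def margTo {n : ℕ} {S : Finset (Fin n)} (μ : Asg S → ℝ) {R : Finset (Fin n)}
    (h : R ⊆ S) (z : Asg R) : ℝ :=
  ∑ y : Asg S, if res h y = z then μ y else 0

/-- A level-`k` Sherali–Adams consistent family on `Fin n`: local distributions
`μ_S` over assignments to each `S ⊆ Fin n` with `|S| ≤ k`, nonnegative, summing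
to `1`, and consistent on intersections whenever `|S ∪ T| ≤ k`. -/
structure SAFamily (n k : ℕ) where
  μ : (S : Finset (Fin n)) → Asg S → ℝ
  nonneg : ∀ S : Finset (Fin n), S.card ≤ k → ∀ y : Asg S, 0 ≤ μ S y
  sum_one : ∀ S : Finset (Fin n), S.card ≤ k → ∑ y : Asg S, μ S y = 1
  consistent : ∀ S T : Finset (Fin n), (S ∪ T).card ≤ k → ∀ z : Asg (S ∩ T),
    margTo (μ S) Finset.inter_subset_left z = margTo (μ T) Finset.inter_subset_right z

/-- Extension of an assignment on `S` to `insert i S` with value `a` at `i`. -/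
def extAsg {n : ℕ} {S : Finset (Fin n)} (i : Fin n) (y : Asg S) (a : ↥B) :
    Asg (insert i S) :=
  fun j => if h : j.1 = i then a else
    y ⟨j.1, by
      rcases Finset.mem_insert.mp j.2 with h' | h'
      · exact absurd h' h
      · exact h'⟩

/-- The conditional entropy `H(μ_i | μ_S)` computed from the local distributions
`μ_{S∪{i}}` and `μ_S` of an SA family (terms with `μ_S(x_S) = 0` contribute `0`). -/
def condEnt {n k : ℕ} (F : SAFamily n k) (S : Finset (Fin n)) (i : Fin n) : ℝ :=
  ∑ y : Asg S, F.μ S y *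
    ent (fun a : ↥B => F.μ (insert i S) (extAsg i y a) / F.μ S y)

/-- The pairwise correlation `E_{μ_{{i,j}}}[x_i x_j]` of an SA family. -/
def pairExp {n k : ℕ} (F : SAFamily n k) (i j : Fin n) : ℝ :=
  ∑ y : Asg ({i, j} : Finset (Fin n)),
    F.μ {i, j} y * (y ⟨i, by simp⟩ : ℝ) * (y ⟨j, by simp⟩ : ℝ)

/-- The augmented mean-field pseudo-entropy of an SA family at level `k'`:
`min_{|S| ≤ k'} [ H(μ_S) + Σ_{i ∉ S} H(μ_i | μ_S) ]`. -/
def pseudoEnt {n k : ℕ} (F : SAFamily n k) (k' : ℕ) : ℝ :=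
  (Finset.univ.filter (fun S : Finset (Fin n) => S.card ≤ k')).inf'
    ⟨∅, Finset.mem_filter.mpr ⟨Finset.mem_univ _, by simp⟩⟩
    (fun S => ent (F.μ S) + ∑ i ∈ Sᶜ, condEnt F S i)

/-- The total interaction strength `J_T = Σ_{i,j} |J i j|`. -/
def JT {n : ℕ} (J : Fin n → Fin n → ℝ) : ℝ := ∑ i : Fin n, ∑ j : Fin n, |J i j|

/-- `E[x_i | x_S]`, computed from `μ_{S∪{i}}` and `μ_S`
(equal to `0` when `μ_S(x_S) = 0`, since `·/0 = 0` in `ℝ`). -/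
def condExp1 {n k : ℕ} (F : SAFamily n k) (S : Finset (Fin n)) (y : Asg S) (i : Fin n) : ℝ :=
  (∑ z : Asg (S ∪ {i}), if res Finset.subset_union_left z = y then
      F.μ (S ∪ {i}) z * (z ⟨i, by simp⟩ : ℝ) else 0) / F.μ S y

/-- `E[x_i x_j | x_S]`, computed from `μ_{S∪{i,j}}` and `μ_S`. -/
def condExp2 {n k : ℕ} (F : SAFamily n k) (S : Finset (Fin n)) (y : Asg S) (i j : Fin n) : ℝ :=
  (∑ z : Asg (S ∪ {i, j}), if res Finset.subset_union_left z = y then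
      F.μ (S ∪ {i, j}) z * (z ⟨i, by simp⟩ : ℝ) * (z ⟨j, by simp⟩ : ℝ) else 0) / F.μ S y

/-- `Σ_{x_S} μ_S(x_S) ( E[x_i x_j | x_S] − E[x_i | x_S] E[x_j | x_S] )`:
the average conditional covariance of coordinates `i, j` given `S`. -/
def condCov {n k : ℕ} (F : SAFamily n k) (S : Finset (Fin n)) (i j : Fin n) : ℝ :=
  ∑ y : Asg S, F.μ S y * (condExp2 F S y i j - condExp1 F S y i * condExp1 F S y j)

/-- Factorization of a sum over the cube, conditionally on the coordinates in `S`. -/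
theorem sum_cube_factor {n : ℕ} (S : Finset (Fin n)) (h : Asg S → ℝ)
    (G : Asg S → Fin n → ↥B → ℝ) :
    ∑ x : Cube n, h (restr S x) * ∏ i ∈ Sᶜ, G (restr S x) i (x i) =
      ∑ y : Asg S, h y * ∏ i ∈ Sᶜ, ∑ a : ↥B, G y i a := by
  have hp : ∀ f : Fin n → ℝ, ∏ i ∈ Sᶜ, f i = ∏ i : {i : Fin n // ¬ i ∈ S}, f i.1 := fun f =>
    Finset.prod_subtype _ (fun i => by simp) f
  rw [← (Equiv.piEquivPiSubtypeProd (fun i => i ∈ S) (fun _ : Fin n => ↥B)).symm.sum_comp,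
    Fintype.sum_prod_type]
  refine Finset.sum_congr rfl fun y _ => ?_
  rw [hp, Fintype.prod_sum, Finset.mul_sum]
  refine Finset.sum_congr rfl fun z _ => ?_
  have hr : restr S ((Equiv.piEquivPiSubtypeProd (fun i => i ∈ S)
      (fun _ : Fin n => ↥B)).symm (y, z)) = y := by
    funext i
    simp [restr, Equiv.piEquivPiSubtypeProd]
  rw [hr, hp]
  congr 1
  refine Finset.prod_congr rfl fun i _ => ?_
  congr 1
  simp [Equiv.piEquivPiSubtypeProd, i.2]

/-- Consistency: summing out the coordinate `i`. -/
theorem sum_extAsg {n k : ℕ} (F : SAFamily n k) (S : Finset (Fin n)) (i : Fin n)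
    (hi : i ∉ S) (hc : S.card + 1 ≤ k) (y : Asg S) :
    ∑ a : ↥B, F.μ (insert i S) (extAsg i y a) = F.μ S y := by
  have hcard : (S ∪ insert i S).card ≤ k := by
    have : S ∪ insert i S = insert i S := by
      apply Finset.union_eq_right.mpr (Finset.subset_insert i S)
    rw [this, Finset.card_insert_of_notMem hi]
    exact hc
  have h := F.consistent S (insert i S) hcard (res Finset.inter_subset_left y)
  have h1 : margTo (F.μ S) Finset.inter_subset_left
      (res (Finset.inter_subset_left (s₂ := insert i S)) y) = F.μ S y := by
    unfold margTo
    rw [Finset.sum_eq_single y]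
    · simp
    · intro b _ hb
      rw [if_neg]
      intro he
      apply hb
      funext j
      exact congrFun he ⟨j.1, Finset.mem_inter.mpr ⟨j.2, Finset.mem_insert_of_mem j.2⟩⟩
    · simp
  rw [h1] at h
  rw [h]
  unfold margTo
  rw [← Finset.sum_filter]
  refine Finset.sum_bij (fun a _ => extAsg i y a) ?_ ?_ ?_ ?_
  · intro a _
    simp only [Finset.mem_filter, Finset.mem_univ, true_and]
    funext j
    have hj : j.1 ≠ i := fun e => hi (e ▸ (Finset.mem_inter.mp j.2).1)
    simp [res, extAsg, hj]
  · intro a _ b _ hab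
    have := congrFun hab ⟨i, Finset.mem_insert_self i S⟩
    simpa [extAsg] using this
  · intro w hw
    simp only [Finset.mem_filter, Finset.mem_univ, true_and] at hw
    refine ⟨w ⟨i, Finset.mem_insert_self i S⟩, Finset.mem_univ _, ?_⟩
    funext j
    obtain ⟨j, hjm⟩ := j
    by_cases hj : j = i
    · subst hj
      simp [extAsg]
    · have hjS : j ∈ S := (Finset.mem_insert.mp hjm).resolve_left hj
      have := congrFun hw ⟨j, Finset.mem_inter.mpr ⟨hjS, hjm⟩⟩
      simp only [extAsg, hj, dite_false]
      exact this.symm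
  · intro a _
    rfl

/-- Entropy of the correlation-rounded distribution: rounding an SA family by
sampling `S` from `μ_S` and all other coordinates conditionally independently
yields a genuine probability distribution `μ̃` on `{-1,1}^n` whose marginal on
`S` is `μ_S` and whose entropy is exactly `H(μ_S) + Σ_{i ∉ S} H(μ_i | μ_S)`. -/
theorem correlation_rounding_entropy (n k : ℕ) (hn : 1 ≤ n) (hk : 2 ≤ k)
    (F : SAFamily n k) (S : Finset (Fin n)) (hS : S.card ≤ k - 1)
    (tμ : Cube n → ℝ)
    (htμ : ∀ x : Cube n, tμ x =
      if F.μ S (restr S x) = 0 then 0 else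
        F.μ S (restr S x) *
          ∏ i ∈ Sᶜ, (F.μ (insert i S) (extAsg i (restr S x) (x i)) / F.μ S (restr S x))) :
    (∀ x, 0 ≤ tμ x) ∧ (∑ x : Cube n, tμ x = 1) ∧
      (∀ y : Asg S, margS tμ S y = F.μ S y) ∧
      ent tμ = ent (F.μ S) + ∑ i ∈ Sᶜ, condEnt F S i := by
  have hc : S.card + 1 ≤ k := by omega
  have hm0 : ∀ y, 0 ≤ F.μ S y := F.nonneg S (by omega)
  let c : Asg S → Fin n → ↥B → ℝ := fun y i a => F.μ (insert i S) (extAsg i y a) / F.μ S y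
  have ht : ∀ x, tμ x = F.μ S (restr S x) * ∏ i ∈ Sᶜ, c (restr S x) i (x i) := by
    intro x
    rw [htμ x]
    split_ifs with h0
    · rw [h0, zero_mul]
    · rfl
  have hc1 : ∀ y, F.μ S y ≠ 0 → ∀ i ∈ Sᶜ, ∑ a : ↥B, c y i a = 1 := by
    intro y hy i hi
    simp only [c]
    rw [← Finset.sum_div, sum_extAsg F S i (by simpa using hi) hc y, div_self hy]
  have hc0 : ∀ y, ∀ i ∈ Sᶜ, ∀ a, 0 ≤ c y i a := by
    intro y i hi a
    refine div_nonneg (F.nonneg _ ?_ _) (hm0 y)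
    rw [Finset.card_insert_of_notMem (by simpa using hi)]
    exact hc
  have hexp : ∀ g : Asg S → ℝ, ∑ x, g (restr S x) * tμ x = ∑ y, g y * F.μ S y := by
    intro g
    simp only [ht, ← mul_assoc]
    rw [sum_cube_factor S (fun y => g y * F.μ S y) c]
    refine Finset.sum_congr rfl fun y _ => ?_
    by_cases hy : F.μ S y = 0
    · simp [hy]
    · rw [Finset.prod_congr rfl (hc1 y hy)]
      simp
  have hlogi : ∀ i ∈ Sᶜ, ∑ x, tμ x * Real.log (c (restr S x) i (x i)) = - condEnt F S i := by
    intro i hi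
    let G : Asg S → Fin n → ↥B → ℝ := fun y j a =>
      c y j a * if j = i then Real.log (c y j a) else 1
    have e1 : ∀ x, tμ x * Real.log (c (restr S x) i (x i)) =
        F.μ S (restr S x) * ∏ j ∈ Sᶜ, G (restr S x) j (x j) := by
      intro x
      simp only [G]
      rw [ht x, Finset.prod_mul_distrib, Finset.prod_ite_eq' Sᶜ i, if_pos hi, mul_assoc]
    rw [Finset.sum_congr rfl fun x _ => e1 x, sum_cube_factor S _ G]
    unfold condEnt ent
    rw [← Finset.sum_neg_distrib]
    refine Finset.sum_congr rfl fun y _ => ?_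
    by_cases hy : F.μ S y = 0
    · simp [hy]
    · rw [Finset.prod_eq_single_of_mem i hi]
      · simp [G, c]
      · intro j hj hji
        simp only [G, if_neg hji, mul_one]
        exact hc1 y hy j hj
  refine ⟨?_, ?_, ?_, ?_⟩
  · intro x
    rw [ht x]
    exact mul_nonneg (hm0 _) (Finset.prod_nonneg fun i hi => hc0 _ i hi _)
  · have := hexp fun _ => 1
    simp only [one_mul] at this
    rw [this]
    exact F.sum_one S (by omega)
  · intro y
    have := hexp fun z => if z = y then 1 else 0
    simpa [margS] using this
  · have hlog : ∀ x, tμ x * Real.log (tμ x) = Real.log (F.μ S (restr S x)) * tμ x +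
        ∑ i ∈ Sᶜ, tμ x * Real.log (c (restr S x) i (x i)) := by
      intro x
      by_cases h0 : tμ x = 0
      · simp [h0]
      · have hne := h0
        rw [ht x] at hne
        have h1 := left_ne_zero_of_mul hne
        have h2 := right_ne_zero_of_mul hne
        rw [← Finset.mul_sum, ← Real.log_prod (fun i hi => Finset.prod_ne_zero_iff.mp h2 i hi),
          mul_comm (Real.log _), ← mul_add, ← Real.log_mul h1 h2, ← ht x]
    have : ∑ x, tμ x * Real.log (tμ x) =
        ∑ y, Real.log (F.μ S y) * F.μ S y + ∑ i ∈ Sᶜ, - condEnt F S i := by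
      rw [Finset.sum_congr rfl fun x _ => hlog x, Finset.sum_add_distrib,
        hexp fun y => Real.log (F.μ S y), Finset.sum_comm, Finset.sum_congr rfl hlogi]
    unfold ent
    rw [this, Finset.sum_neg_distrib]
    simp only [mul_comm (Real.log _)]
    ring
end
end

section
/- (Main theorem, dense case.) There exists a universal constant C > 0 such that the following holds. Let n ≥ 1, Δ ∈ (0,1], ε ∈ (0,1), and let J : Fin n → Fin n → ℝ be Δ-dense, i.e. Δ·|J i j| ≤ J_T/n² for all i ≠ j, where J_T = Σ_{i,j} |J i j|. Let Z = Σ_{x ∈ {-1,1}^n} exp(Σ_{i,j} J i j · x i · x j), let k = ⌈C/(Δ·ε²)⌉, and let V be the supremum, over all SA(k+2)-consistent families (μ_S) on Fin n, of Σ_{i,j} J i j · E_{μ_{{i,j}}}[x i · x j] + min over S ⊆ Fin n with |S| ≤ k of [ H(μ_S) + Σ_{i ∉ S} H(μ_i | μ_S) ]. Then log Z ≤ V ≤ log Z + ε·J_T. -/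
open scoped BigOperators

noncomputable section

/-! ### Flips of spins -/

/-- Negation of a spin. -/
def nb (b : ↥B) : ↥B := ⟨-(b : ℝ), by
  have := b.2
  simp only [B, Finset.mem_insert, Finset.mem_singleton] at this ⊢
  rcases this with h | h <;> simp [h]⟩

lemma nb_coe (b : ↥B) : ((nb b : ↥B) : ℝ) = -(b : ℝ) := rfl

lemma b_sq (b : ↥B) : (b : ℝ) * (b : ℝ) = 1 := by
  have := b.2
  simp only [B, Finset.mem_insert, Finset.mem_singleton] at this
  rcases this with h | h <;> simp [h]

lemma b_cases (b : ↥B) : (b : ℝ) = 1 ∨ (b : ℝ) = -1 := by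
  have := b.2
  simp only [B, Finset.mem_insert, Finset.mem_singleton] at this
  exact this.symm

lemma nb_nb (b : ↥B) : nb (nb b) = b := by
  apply Subtype.ext; simp [nb_coe]

lemma eq_or_nb (a b : ↥B) : a = b ∨ a = nb b := by
  rcases b_cases a with h | h <;> rcases b_cases b with h' | h'
  · left; apply Subtype.ext; rw [h, h']
  · right; apply Subtype.ext; rw [nb_coe, h, h']; norm_num
  · right; apply Subtype.ext; rw [nb_coe, h, h']
  · left; apply Subtype.ext; rw [h, h']

lemma ne_nb (b : ↥B) : b ≠ nb b := by
  intro h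
  have h2 := congrArg (fun z : ↥B => (z : ℝ)) h
  simp only [nb_coe] at h2
  have := b_sq b
  nlinarith

lemma sumB (f : ↥B → ℝ) (b : ↥B) : ∑ a, f a = f b + f (nb b) := by
  have : (Finset.univ : Finset ↥B) = {b, nb b} := by
    ext a; simp only [Finset.mem_univ, Finset.mem_insert, Finset.mem_singleton, true_iff]
    exact eq_or_nb a b
  rw [this, Finset.sum_pair (ne_nb b)]

lemma cardB : Fintype.card ↥B = 2 := by
  rw [Fintype.card_coe]
  exact Finset.card_pair (by norm_num)

variable {n : ℕ}

/-- Flip coordinate `j`. -/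
def fl (j : Fin n) (x : Cube n) : Cube n := Function.update x j (nb (x j))

lemma fl_self (j : Fin n) (x : Cube n) : ((fl j x j : ↥B) : ℝ) = -(x j : ℝ) := by
  simp [fl, nb_coe]

lemma fl_ne {i j : Fin n} (h : i ≠ j) (x : Cube n) : fl j x i = x i := by
  simp [fl, h]

lemma fl_fl (j : Fin n) (x : Cube n) : fl j (fl j x) = x := by
  simp [fl, nb_nb]

lemma fl_comm (i j : Fin n) (x : Cube n) : fl i (fl j x) = fl j (fl i x) := by
  by_cases h : i = j
  · rw [h]
  · simp only [fl]
    rw [Function.update_of_ne h, Function.update_of_ne (Ne.symm h),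
      Function.update_comm h]

lemma sum_fl (j : Fin n) (f : Cube n → ℝ) : ∑ x, f (fl j x) = ∑ x, f x :=
  Equiv.sum_comp (⟨fl j, fl j, fl_fl j, fl_fl j⟩ : Cube n ≃ Cube n) f

lemma sum_avg (j : Fin n) (f : Cube n → ℝ) :
    ∑ x, f x = ∑ x, (f x + f (fl j x)) / 2 := by
  rw [← Finset.sum_div, Finset.sum_add_distrib, sum_fl]; ring

/-! ### Lifted families of local distributions -/

/-- Properties of the lifts of the local distributions to the whole cube. -/
structure WF (n K : ℕ) (W : Finset (Fin n) → Cube n → ℝ) : Prop where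
  nonneg : ∀ S : Finset (Fin n), S.card ≤ K → ∀ x, 0 ≤ W S x
  sum_one : ∀ S : Finset (Fin n), S.card ≤ K → ∑ x, W S x = 1
  inv : ∀ (S : Finset (Fin n)) (j : Fin n), j ∉ S → ∀ x, W S (fl j x) = W S x
  cons : ∀ (S : Finset (Fin n)) (j : Fin n), j ∉ S → S.card + 1 ≤ K → ∀ x,
    W S x = (W (insert j S) x + W (insert j S) (fl j x)) / 2

/-- unnormalised conditional mean -/
def mm (W : Finset (Fin n) → Cube n → ℝ) (S : Finset (Fin n)) (i : Fin n) (x : Cube n) : ℝ :=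
  (x i : ℝ) * (W (insert i S) x - W (insert i S) (fl i x)) / 2

/-- unnormalised conditional second moment -/
def cc (W : Finset (Fin n) → Cube n → ℝ) (S : Finset (Fin n)) (i j : Fin n) (x : Cube n) : ℝ :=
  (x j : ℝ) * (mm W (insert j S) i x - mm W (insert j S) i (fl j x)) / 2

section
variable {K : ℕ} {W : Finset (Fin n) → Cube n → ℝ} (hW : WF n K W)
  {S : Finset (Fin n)} {i j : Fin n}

lemma mm_fl_self (x : Cube n) : mm W S i (fl i x) = mm W S i x := by
  simp only [mm, fl_self, fl_fl]; ring

lemma cc_fl_self (x : Cube n) : cc W S i j (fl j x) = cc W S i j x := by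
  simp only [cc, fl_self, fl_fl]; ring

lemma W_ins (hW : WF n K W) (hi : i ∉ S) (hc : S.card + 1 ≤ K) (x : Cube n) :
    W (insert i S) x = W S x + (x i : ℝ) * mm W S i x := by
  rw [hW.cons S i hi hc x, mm]
  have := b_sq (x i)
  linear_combination (-(W (insert i S) x - W (insert i S) (fl i x)) / 2) * this

lemma mm_fl (hW : WF n K W) (hj : j ∉ S) (x : Cube n) : mm W S i (fl j x) = mm W S i x := by
  by_cases h : j = i
  · subst h; exact mm_fl_self x
  · have hj' : j ∉ insert i S := by simp [h, hj]
    simp only [mm]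
    rw [fl_comm i j, hW.inv _ _ hj', hW.inv _ _ hj', fl_ne (Ne.symm h)]

lemma cc_fl (hij : i ≠ j) (x : Cube n) :
    cc W S i j (fl i x) = cc W S i j x := by
  simp only [cc]
  rw [fl_comm j i, mm_fl_self, mm_fl_self, fl_ne (Ne.symm hij)]

lemma mm_abs (hW : WF n K W) (hi : i ∉ S) (hc : S.card + 1 ≤ K) (x : Cube n) :
    |mm W S i x| ≤ W S x := by
  have hc' : (insert i S).card ≤ K := by rw [Finset.card_insert_of_notMem hi]; exact hc
  have h1 := hW.nonneg _ hc' x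
  have h2 := hW.nonneg _ hc' (fl i x)
  rw [W_ins hW hi hc] at h1 h2
  rw [fl_self, mm_fl_self, hW.inv _ _ hi] at h2
  rw [abs_le]
  rcases b_cases (x i) with h | h <;> rw [h] at h1 h2 <;> constructor <;> linarith

lemma mm_ins (hW : WF n K W) (hi : i ∉ S) (hj : j ∉ S) (hij : i ≠ j) (hc : S.card + 2 ≤ K)
    (x : Cube n) : mm W (insert j S) i x = mm W S i x + (x j : ℝ) * cc W S i j x := by
  have hji : j ∉ insert i S := by simp [hj, Ne.symm hij]
  have hcard : (insert i S).card + 1 ≤ K := by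
    rw [Finset.card_insert_of_notMem hi]; omega
  have e1 := hW.cons _ j hji hcard x
  have e2 := hW.cons _ j hji hcard (fl i x)
  have hb := b_sq (x j)
  have key : mm W S i x = (mm W (insert j S) i x + mm W (insert j S) i (fl j x)) / 2 := by
    simp only [mm]
    rw [e1, e2, Finset.insert_comm i j S, fl_ne hij, fl_comm i j]
    ring
  rw [key, cc]
  linear_combination (-(mm W (insert j S) i x - mm W (insert j S) i (fl j x)) / 2) * hb

lemma scalar_drop (w m mj c : ℝ) (h1 : |m + c| ≤ w + mj) (h2 : |m - c| ≤ w - mj) :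
    m ^ 2 / w + (c - m * mj / w) ^ 2 / w ≤
      ((m + c) ^ 2 / (w + mj) + (m - c) ^ 2 / (w - mj)) / 2 := by
  have a1 : 0 ≤ w + mj := (abs_nonneg _).trans h1
  have a2 : 0 ≤ w - mj := (abs_nonneg _).trans h2
  rcases eq_or_lt_of_le (show 0 ≤ w by linarith) with hw | hw
  · rw [← hw]; simp only [div_zero, add_zero]
    rw [← hw] at a1 a2
    exact div_nonneg (add_nonneg (div_nonneg (sq_nonneg _) a1) (div_nonneg (sq_nonneg _) a2)) (by norm_num)
  rcases eq_or_lt_of_le a1 with b1 | b1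
  · rw [← b1] at h1
    have e1 : m + c = 0 := abs_eq_zero.mp (le_antisymm h1 (abs_nonneg _))
    have e2 : mj = -w := by linarith
    have e3 : c = -m := by linarith
    subst e2; subst e3
    apply le_of_eq; field_simp; ring
  rcases eq_or_lt_of_le a2 with b2 | b2
  · rw [← b2] at h2
    have e1 : m - c = 0 := abs_eq_zero.mp (le_antisymm h2 (abs_nonneg _))
    have e2 : mj = w := by linarith
    have e3 : c = m := by linarith
    subst e2; subst e3
    apply le_of_eq; field_simp; ring
  have id : ((m + c) ^ 2 / (w + mj) + (m - c) ^ 2 / (w - mj)) / 2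
      - (m ^ 2 / w + (c - m * mj / w) ^ 2 / w)
      = (w * c - m * mj) ^ 2 * mj ^ 2 / (w ^ 3 * ((w + mj) * (w - mj))) := by
    field_simp; ring
  have : 0 ≤ (w * c - m * mj) ^ 2 * mj ^ 2 / (w ^ 3 * ((w + mj) * (w - mj))) := by positivity
  linarith

/-- local covariance density -/
def dd (W : Finset (Fin n) → Cube n → ℝ) (S : Finset (Fin n)) (i j : Fin n) (x : Cube n) : ℝ :=
  cc W S i j x - mm W S i x * mm W S j x / W S x

lemma drop (hW : WF n K W) (hi : i ∉ S) (hj : j ∉ S) (hij : i ≠ j) (hc : S.card + 2 ≤ K) :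
    ∑ x, mm W S i x ^ 2 / W S x + ∑ x, dd W S i j x ^ 2 / W S x ≤
      ∑ x, mm W (insert j S) i x ^ 2 / W (insert j S) x := by
  rw [sum_avg j (fun x => mm W (insert j S) i x ^ 2 / W (insert j S) x), ← Finset.sum_add_distrib]
  apply Finset.sum_le_sum
  intro x _
  have hcj : (insert j S).card + 1 ≤ K := by rw [Finset.card_insert_of_notMem hj]; omega
  have hi' : i ∉ insert j S := by simp [hi, hij]
  have A1 := mm_abs hW hi' hcj x
  have A2 := mm_abs hW hi' hcj (fl j x)
  rw [mm_ins hW hi hj hij hc, W_ins hW hj (by omega)] at A1 A2 ⊢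
  rw [mm_ins hW hi hj hij hc, W_ins hW hj (by omega)]
  simp only [fl_self, mm_fl hW hj, hW.inv S j hj, cc_fl_self] at A2 ⊢
  rcases b_cases (x j) with h | h
  · rw [h] at A1 A2 ⊢
    have := scalar_drop (W S x) (mm W S i x) (mm W S j x) (cc W S i j x)
      (by simpa using A1) (by simpa [sub_eq_add_neg] using A2)
    simpa [dd, sub_eq_add_neg] using this
  · rw [h] at A1 A2 ⊢
    have := scalar_drop (W S x) (mm W S i x) (mm W S j x) (cc W S i j x)
      (by simpa using A2) (by simpa [sub_eq_add_neg] using A1)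
    simp only [dd]
    refine this.trans (le_of_eq ?_)
    simp [sub_eq_add_neg]
    ring

/-- The variance potential. -/
def Phi (W : Finset (Fin n) → Cube n → ℝ) (S : Finset (Fin n)) : ℝ :=
  ∑ i ∈ Sᶜ, (1 - ∑ x, mm W S i x ^ 2 / W S x)

lemma var_nonneg (hW : WF n K W) (hi : i ∉ S) (hc : S.card + 1 ≤ K) :
    0 ≤ 1 - ∑ x, mm W S i x ^ 2 / W S x := by
  rw [← hW.sum_one S (by omega), ← Finset.sum_sub_distrib]
  apply Finset.sum_nonneg
  intro x _
  have h := mm_abs hW hi hc x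
  have h0 : 0 ≤ W S x := (abs_nonneg _).trans h
  rw [sub_nonneg]
  apply div_le_of_le_mul₀ h0 h0
  rw [← sq_abs, sq]
  exact mul_le_mul h h (abs_nonneg _) h0

lemma Phi_nonneg (hW : WF n K W) (hc : S.card + 1 ≤ K) : 0 ≤ Phi W S :=
  Finset.sum_nonneg fun i hi => var_nonneg hW (by simpa using hi) hc

lemma Phi_empty (hW : WF n K W) : Phi W (∅ : Finset (Fin n)) ≤ n := by
  have : Phi W (∅ : Finset (Fin n)) ≤ ∑ i ∈ (∅ : Finset (Fin n))ᶜ, (1 : ℝ) := by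
    apply Finset.sum_le_sum
    intro i _
    have : 0 ≤ ∑ x, mm W ∅ i x ^ 2 / W ∅ x := Finset.sum_nonneg fun x _ =>
      div_nonneg (sq_nonneg _) (hW.nonneg ∅ (by simp) x)
    linarith
  simpa using this

lemma Phi_drop (hW : WF n K W) (hj : j ∉ S) (hc : S.card + 2 ≤ K) :
    Phi W (insert j S) + ∑ i ∈ (insert j S)ᶜ, ∑ x, dd W S i j x ^ 2 / W S x ≤ Phi W S := by
  have e : Sᶜ = insert j (insert j S)ᶜ := by
    ext i; simp only [Finset.mem_compl, Finset.mem_insert]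
    by_cases h : i = j
    · subst h; simp [hj]
    · simp [h]
  unfold Phi
  rw [e, Finset.sum_insert (by simp), ← Finset.sum_add_distrib]
  have h1 := var_nonneg hW hj (by omega)
  have h2 : ∑ i ∈ (insert j S)ᶜ, (1 - ∑ x, mm W (insert j S) i x ^ 2 / W (insert j S) x +
      ∑ x, dd W S i j x ^ 2 / W S x) ≤ ∑ i ∈ (insert j S)ᶜ, (1 - ∑ x, mm W S i x ^ 2 / W S x) := by
    apply Finset.sum_le_sum
    intro i hi
    simp only [Finset.mem_compl, Finset.mem_insert, not_or] at hi
    have := drop hW hi.2 hj hi.1 hc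
    linarith
  linarith

lemma exists_good {k : ℕ} (hn : 1 ≤ n) (hk : 1 ≤ k) (hW : WF n (k + 2) W) :
    ∃ S : Finset (Fin n), S.card ≤ k ∧
      ∑ j ∈ Sᶜ, ∑ i ∈ (insert j S)ᶜ, ∑ x, dd W S i j x ^ 2 / W S x ≤ (n : ℝ) ^ 2 / k := by
  by_contra hcon
  push Not at hcon
  have hn' : (0 : ℝ) < n := by exact_mod_cast hn
  have hk' : (0 : ℝ) < k := by exact_mod_cast hk
  have claim : ∀ t : ℕ, t ≤ k + 1 → ∃ S : Finset (Fin n), S.card = t ∧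
      Phi W S ≤ n - t * (n / k : ℝ) := by
    intro t
    induction t with
    | zero => intro _; exact ⟨∅, rfl, by simpa using Phi_empty hW⟩
    | succ t ih =>
      intro ht
      obtain ⟨S, hS, hP⟩ := ih (by omega)
      have hb := hcon S (by omega)
      have hex : ∃ j ∈ Sᶜ, (n / k : ℝ) <
          ∑ i ∈ (insert j S)ᶜ, ∑ x, dd W S i j x ^ 2 / W S x := by
        by_contra hno
        push Not at hno
        have h1 := Finset.sum_le_sum hno
        rw [Finset.sum_const, nsmul_eq_mul] at h1
        have h2 : ((Sᶜ.card : ℕ) : ℝ) ≤ n := by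
          exact_mod_cast (Finset.card_le_univ _).trans (by simp)
        have h3 : ((Sᶜ.card : ℕ) : ℝ) * (n / k) ≤ n * (n / k) :=
          mul_le_mul_of_nonneg_right h2 (by positivity)
        have h4 : (n : ℝ) * (n / k) = n ^ 2 / k := by ring
        linarith
      obtain ⟨j, hj, hlt⟩ := hex
      have hj' : j ∉ S := by simpa using hj
      refine ⟨insert j S, by rw [Finset.card_insert_of_notMem hj', hS], ?_⟩
      have := Phi_drop hW hj' (by omega)
      push_cast
      linarith
  obtain ⟨S, hS, hP⟩ := claim (k + 1) le_rfl
  have h0 := Phi_nonneg hW (S := S) (by omega)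
  push_cast at hP
  have : (k : ℝ) * (n / k) = n := by field_simp
  have : (0 : ℝ) < n / k := by positivity
  linarith

end

section
variable {K : ℕ} {W : Finset (Fin n) → Cube n → ℝ} {S T : Finset (Fin n)} {i j : Fin n}

lemma W_mono (hW : WF n K W) (g : Cube n → ℝ) (R : Finset (Fin n)) :
    Disjoint R S → (R ∪ S).card ≤ K → (∀ j ∈ R, ∀ x, g (fl j x) = g x) →
    ∑ x, W (R ∪ S) x * g x = ∑ x, W S x * g x := by
  induction R using Finset.induction_on with
  | empty => intro _ _ _; simp
  | insert j R hj ih =>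
    intro hd hc hg
    rw [Finset.disjoint_insert_left] at hd
    have hj' : j ∉ R ∪ S := by simp [hj, hd.1]
    rw [Finset.insert_union] at hc ⊢
    rw [Finset.card_insert_of_notMem hj'] at hc
    rw [← ih hd.2 (by omega) (fun i hi => hg i (by simp [hi])), sum_avg j]
    apply Finset.sum_congr rfl
    intro x _
    rw [hg j (by simp), hW.cons _ j hj' hc x]
    ring

/-- Partial products of the rounded distribution. -/
def nu (W : Finset (Fin n) → Cube n → ℝ) (S T : Finset (Fin n)) (x : Cube n) : ℝ :=
  W S x * ∏ i ∈ T, (W (insert i S) x / W S x)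

lemma nu_nonneg (hW : WF n K W) (hc : S.card + 1 ≤ K) (x : Cube n) : 0 ≤ nu W S T x := by
  apply mul_nonneg (hW.nonneg S (by omega) x)
  apply Finset.prod_nonneg
  intro i _
  exact div_nonneg (hW.nonneg _ ((Finset.card_insert_le _ _).trans hc) x)
    (hW.nonneg S (by omega) x)

lemma nu_avg (hW : WF n K W) (hc : S.card + 1 ≤ K) (hj : j ∉ S) (hjT : j ∉ T) (x : Cube n) :
    (nu W S (insert j T) x + nu W S (insert j T) (fl j x)) / 2 = nu W S T x := by
  simp only [nu]
  rw [Finset.prod_insert hjT, Finset.prod_insert hjT, hW.inv S j hj]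
  have : ∏ i ∈ T, (W (insert i S) (fl j x) / W S x) = ∏ i ∈ T, (W (insert i S) x / W S x) := by
    apply Finset.prod_congr rfl
    intro i hi
    rw [hW.inv]
    have : j ≠ i := fun h => hjT (h ▸ hi)
    simp [this, hj]
  rw [this]
  have hcons := hW.cons S j hj hc x
  by_cases h0 : W S x = 0
  · simp [h0]
  · have : W (insert j S) x / W S x + W (insert j S) (fl j x) / W S x = 2 := by
      field_simp; linarith
    linear_combination (W S x * (∏ i ∈ T, (W (insert i S) x / W S x)) / 2) * this

lemma nu_marg (hW : WF n K W) (hc : S.card + 1 ≤ K) (g : Cube n → ℝ) (R : Finset (Fin n)) :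
    Disjoint R S → Disjoint R T → (∀ j ∈ R, ∀ x, g (fl j x) = g x) →
    ∑ x, nu W S (R ∪ T) x * g x = ∑ x, nu W S T x * g x := by
  induction R using Finset.induction_on with
  | empty => intro _ _ _; simp
  | insert j R hj ih =>
    intro hd hd' hg
    rw [Finset.disjoint_insert_left] at hd hd'
    have hj' : j ∉ R ∪ T := by simp [hj, hd'.1]
    rw [Finset.insert_union]
    rw [← ih hd.2 hd'.2 (fun i hi => hg i (by simp [hi])), sum_avg j]
    apply Finset.sum_congr rfl
    intro x _
    rw [hg j (by simp), ← nu_avg hW hc hd.1 hj' x]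
    ring

lemma nu_marg' (hW : WF n K W) (hc : S.card + 1 ≤ K) (g : Cube n → ℝ) (hT : T ⊆ Sᶜ)
    (hg : ∀ j, j ∉ S → j ∉ T → ∀ x, g (fl j x) = g x) :
    ∑ x, nu W S Sᶜ x * g x = ∑ x, nu W S T x * g x := by
  have := nu_marg (T := T) hW hc g (Sᶜ \ T)
    (Finset.disjoint_left.mpr fun a ha => by simp at ha; exact ha.1)
    Finset.sdiff_disjoint (fun j hj => by simp at hj; exact hg j hj.1 hj.2)
  rwa [Finset.sdiff_union_of_subset hT] at this

lemma W_zero (hW : WF n K W) (hi : i ∉ S) (hc : S.card + 1 ≤ K) {x : Cube n} (h : W S x = 0) :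
    W (insert i S) x = 0 := by
  have h1 := mm_abs hW hi hc x
  rw [h] at h1
  rw [W_ins hW hi hc, h, abs_eq_zero.mp (le_antisymm h1 (abs_nonneg _))]
  simp

lemma nu_marg0 (hW : WF n K W) (hc : S.card + 1 ≤ K) (g : Cube n → ℝ)
    (hg : ∀ j, j ∉ S → ∀ x, g (fl j x) = g x) :
    ∑ x, nu W S Sᶜ x * g x = ∑ x, W S x * g x := by
  rw [nu_marg' (T := ∅) hW hc g (by simp) (fun j hj _ => hg j hj)]
  simp [nu]

lemma nu_marg1 (hW : WF n K W) (hc : S.card + 1 ≤ K) (hi : i ∉ S) (g : Cube n → ℝ)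
    (hg : ∀ j, j ∉ insert i S → ∀ x, g (fl j x) = g x) :
    ∑ x, nu W S Sᶜ x * g x = ∑ x, W (insert i S) x * g x := by
  rw [nu_marg' (T := {i}) hW hc g (by simpa using hi)
    (fun j hj hj' => hg j (by simp at hj'; simp [hj, hj']))]
  apply Finset.sum_congr rfl
  intro x _
  simp only [nu, Finset.prod_singleton]
  by_cases h0 : W S x = 0
  · rw [W_zero hW hi hc h0]; simp
  · field_simp

lemma nu_marg2 (hW : WF n K W) (hc : S.card + 2 ≤ K) (hi : i ∉ S) (hj : j ∉ S) (hij : i ≠ j) :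
    ∑ x, nu W S Sᶜ x * ((x i : ℝ) * (x j : ℝ)) = ∑ x, mm W S i x * mm W S j x / W S x := by
  rw [nu_marg' (T := {i, j}) hW (by omega) _
    (by intro a ha; simp at ha; rcases ha with h | h <;> simp [h, hi, hj])
    (fun l hl hl' x => by
      simp at hl'
      rw [fl_ne (fun h => hl'.1 h.symm), fl_ne (fun h => hl'.2 h.symm)])]
  rw [sum_avg i, sum_avg j]
  apply Finset.sum_congr rfl
  intro x _
  simp only [nu, Finset.prod_pair hij]
  simp only [W_ins hW hi (by omega : S.card + 1 ≤ K), W_ins hW hj (by omega : S.card + 1 ≤ K),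
    mm_fl hW hi, mm_fl hW hj, hW.inv S i hi, hW.inv S j hj, fl_self, fl_ne hij,
    fl_ne (Ne.symm hij)]
  by_cases h0 : W S x = 0
  · simp [h0]
  have h1 := b_sq (x i)
  have h2 := b_sq (x j)
  field_simp
  linear_combination (mm W S i x * mm W S j x * (x j) ^ 2 * 4) * h1
    + (mm W S i x * mm W S j x * 4) * h2

lemma sum_cc (hW : WF n K W) (hc : S.card + 2 ≤ K) (hi : i ∉ S) (hj : j ∉ S) (hij : i ≠ j) :
    ∑ x, W {i, j} x * ((x i : ℝ) * (x j : ℝ)) = ∑ x, cc W S i j x := by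
  have e : S ∪ {i, j} = insert i (insert j S) := by ext; simp
  have hi' : i ∉ insert j S := by simp [hi, hij]
  have hcj : (insert j S).card + 1 ≤ K := by rw [Finset.card_insert_of_notMem hj]; omega
  rw [← W_mono hW (fun x : Cube n => (x i : ℝ) * (x j : ℝ)) S, e, sum_avg i, sum_avg j]
  · apply Finset.sum_congr rfl
    intro x _
    simp only [W_ins hW hi' hcj, W_ins hW hj (by omega : S.card + 1 ≤ K),
      mm_ins hW hi hj hij hc, cc_fl_self, cc_fl hij,
      mm_fl hW hi, mm_fl hW hj, hW.inv S i hi, hW.inv S j hj, fl_self, fl_ne hij,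
      fl_ne (Ne.symm hij)]
    have h1 := b_sq (x i)
    have h2 := b_sq (x j)
    ring_nf
    linear_combination (cc W S i j x * (x j) ^ 2) * h1 + cc W S i j x * h2
  · rw [Finset.disjoint_right]; intro a ha; simp at ha; rcases ha with h | h <;> simp [h, hi, hj]
  · rw [e, Finset.card_insert_of_notMem hi']; exact hcj
  · intro l hl x
    rw [fl_ne (ne_of_mem_of_not_mem hl hi).symm, fl_ne (ne_of_mem_of_not_mem hl hj).symm]

/-- pair correlations agree as soon as one coordinate is in `S` or they coincide. -/
lemma pair_easy (hW : WF n K W) (hc : S.card + 2 ≤ K) (h : i ∈ S ∨ j ∈ S ∨ i = j) :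
    ∑ x, nu W S Sᶜ x * ((x i : ℝ) * (x j : ℝ)) = ∑ x, W {i, j} x * ((x i : ℝ) * (x j : ℝ)) := by
  have aux : ∀ R : Finset (Fin n), i ∈ R → j ∈ R → R.card ≤ K →
      ∑ x, W R x * ((x i : ℝ) * (x j : ℝ)) = ∑ x, W {i, j} x * ((x i : ℝ) * (x j : ℝ)) := by
    intro R hiR hjR hR
    have hsub : ({i, j} : Finset (Fin n)) ⊆ R := by
      intro a ha; simp at ha; rcases ha with h | h <;> simpa [h]
    have := W_mono (S := {i, j}) hW (fun x : Cube n => (x i : ℝ) * (x j : ℝ)) (R \ {i, j})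
      Finset.sdiff_disjoint (by rwa [Finset.sdiff_union_of_subset hsub])
      (fun l hl x => by
        simp at hl
        rw [fl_ne (fun h => hl.2.1 h.symm), fl_ne (fun h => hl.2.2 h.symm)])
    rwa [Finset.sdiff_union_of_subset hsub] at this
  have ginv : ∀ R : Finset (Fin n), i ∈ R → j ∈ R → ∀ l, l ∉ R → ∀ x : Cube n,
      (fl l x i : ℝ) * (fl l x j : ℝ) = (x i : ℝ) * (x j : ℝ) := by
    intro R hiR hjR l hl x
    rw [fl_ne (ne_of_mem_of_not_mem hiR hl), fl_ne (ne_of_mem_of_not_mem hjR hl)]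
  by_cases hi : i ∈ S
  · by_cases hj : j ∈ S
    · rw [nu_marg0 hW (by omega) _ (ginv S hi hj), aux S hi hj (by omega)]
    · rw [nu_marg1 hW (by omega) hj _ (ginv _ (by simp [hi]) (by simp)),
        aux _ (by simp [hi]) (by simp) (by rw [Finset.card_insert_of_notMem hj]; omega)]
  · by_cases hj : j ∈ S
    · rw [nu_marg1 hW (by omega) hi _ (ginv _ (by simp) (by simp [hj])),
        aux _ (by simp) (by simp [hj]) (by rw [Finset.card_insert_of_notMem hi]; omega)]
    · have hij : i = j := by tauto
      subst hij
      rw [nu_marg1 hW (by omega) hi _ (ginv _ (by simp) (by simp)),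
        aux _ (by simp) (by simp) (by rw [Finset.card_insert_of_notMem hi]; omega)]

lemma pair_hard (hW : WF n K W) (hc : S.card + 2 ≤ K) (hi : i ∉ S) (hj : j ∉ S) (hij : i ≠ j) :
    ∑ x, W {i, j} x * ((x i : ℝ) * (x j : ℝ)) =
    ∑ x, nu W S Sᶜ x * ((x i : ℝ) * (x j : ℝ)) + ∑ x, dd W S i j x := by
  rw [sum_cc hW hc hi hj hij, nu_marg2 hW hc hi hj hij, ← Finset.sum_add_distrib]
  apply Finset.sum_congr rfl
  intro x _
  simp [dd]

lemma cc_zero (hW : WF n K W) (hc : S.card + 2 ≤ K) (hi : i ∉ S) (hj : j ∉ S) (hij : i ≠ j)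
    {x : Cube n} (h : W S x = 0) : cc W S i j x = 0 := by
  have hi' : i ∉ insert j S := by simp [hi, hij]
  have hcj : (insert j S).card + 1 ≤ K := by rw [Finset.card_insert_of_notMem hj]; omega
  have h1 := mm_abs hW hi' hcj x
  have h2 := mm_abs hW hi' hcj (fl j x)
  rw [W_zero hW hj (by omega) h] at h1
  rw [W_zero hW hj (by omega) (by rwa [hW.inv S j hj])] at h2
  rw [cc, abs_eq_zero.mp (le_antisymm h1 (abs_nonneg _)),
    abs_eq_zero.mp (le_antisymm h2 (abs_nonneg _))]
  simp

lemma dd_sq (hW : WF n K W) (hc : S.card + 2 ≤ K) (hi : i ∉ S) (hj : j ∉ S) (hij : i ≠ j) :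
    (∑ x, dd W S i j x) ^ 2 ≤ ∑ x, dd W S i j x ^ 2 / W S x := by
  have h := Finset.sum_sq_le_sum_mul_sum_of_sq_le_mul Finset.univ
    (r := fun x => dd W S i j x) (f := fun x => dd W S i j x ^ 2 / W S x) (g := fun x => W S x)
    (fun x _ => div_nonneg (sq_nonneg _) (hW.nonneg S (by omega) x))
    (fun x _ => hW.nonneg S (by omega) x)
    (fun x _ => by
      by_cases h0 : W S x = 0
      · simp [dd, h0, cc_zero hW hc hi hj hij h0]
      · exact le_of_eq (by field_simp))
  rwa [hW.sum_one S (by omega), mul_one] at h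

lemma nu_sum (hW : WF n K W) (hc : S.card + 1 ≤ K) : ∑ x, nu W S Sᶜ x = 1 := by
  have := nu_marg0 hW hc (fun _ => 1) (fun _ _ _ => rfl)
  simp only [mul_one] at this
  rw [this, hW.sum_one S (by omega)]

/-- energy comparison at a good seed set. -/
lemma energy {k : ℕ} (hn : 1 ≤ n) (hk : 1 ≤ k) (hW : WF n (k + 2) W) {Δ ε : ℝ} (hΔ : 0 < Δ)
    (hε : 0 < ε) (hkε : 1 / (Δ * ε ^ 2) ≤ k) (J : Fin n → Fin n → ℝ)
    (hJ : ∀ i j : Fin n, i ≠ j → Δ * |J i j| ≤ JT J / (n : ℝ) ^ 2) (hS : S.card ≤ k)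
    (hgood : ∑ j ∈ Sᶜ, ∑ i ∈ (insert j S)ᶜ, ∑ x, dd W S i j x ^ 2 / W S x ≤ (n : ℝ) ^ 2 / k) :
    ∑ i, ∑ j, J i j * ∑ x, W {i, j} x * ((x i : ℝ) * (x j : ℝ)) ≤
      ∑ i, ∑ j, J i j * ∑ x, nu W S Sᶜ x * ((x i : ℝ) * (x j : ℝ)) + ε * JT J := by
  have hn' : (0 : ℝ) < n := by exact_mod_cast hn
  have hk' : (0 : ℝ) < k := by exact_mod_cast hk
  have hJT : 0 ≤ JT J := Finset.sum_nonneg fun i _ => Finset.sum_nonneg fun j _ => abs_nonneg _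
  set κ : Fin n → Fin n → ℝ := fun i j =>
    if i ∉ S ∧ j ∉ S ∧ i ≠ j then ∑ x, dd W S i j x else 0 with hκ
  have e : ∀ i j, ∑ x, W {i, j} x * ((x i : ℝ) * (x j : ℝ)) =
      ∑ x, nu W S Sᶜ x * ((x i : ℝ) * (x j : ℝ)) + κ i j := by
    intro i j
    by_cases h : i ∉ S ∧ j ∉ S ∧ i ≠ j
    · simp only [hκ, if_pos h]
      exact pair_hard hW (by omega) h.1 h.2.1 h.2.2
    · simp only [hκ, if_neg h, add_zero]
      exact (pair_easy hW (by omega) (by tauto)).symm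
  have hκsum : ∑ i, ∑ j, κ i j ^ 2 ≤ (n : ℝ) ^ 2 / k := by
    refine le_trans ?_ hgood
    rw [Finset.sum_comm]
    have : ∀ j : Fin n, ∑ i, κ i j ^ 2 ≤
        if j ∈ Sᶜ then ∑ i ∈ (insert j S)ᶜ, ∑ x, dd W S i j x ^ 2 / W S x else 0 := by
      intro j
      split_ifs with hj
      · rw [← Finset.sum_subset (Finset.subset_univ (insert j S)ᶜ)]
        · apply Finset.sum_le_sum
          intro i hi
          simp only [Finset.mem_compl, Finset.mem_insert, not_or] at hi hj
          simp only [hκ, if_pos (⟨hi.2, hj, hi.1⟩ : i ∉ S ∧ j ∉ S ∧ i ≠ j)]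
          exact dd_sq hW (by omega) hi.2 hj hi.1
        · intro i _ hi
          simp only [Finset.mem_compl, Finset.mem_insert, not_not] at hi
          have : ¬ (i ∉ S ∧ j ∉ S ∧ i ≠ j) := by tauto
          simp only [hκ, if_neg this]; norm_num
      · apply le_of_eq
        apply Finset.sum_eq_zero
        intro i _
        simp only [Finset.mem_compl, not_not] at hj
        have : ¬ (i ∉ S ∧ j ∉ S ∧ i ≠ j) := by tauto
        simp only [hκ, if_neg this]; norm_num
    refine (Finset.sum_le_sum fun j _ => this j).trans (le_of_eq ?_)
    rw [Finset.sum_ite_mem, Finset.univ_inter]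
  have hcs : (∑ i, ∑ j, |J i j| * |κ i j|) ^ 2 ≤ (ε * JT J) ^ 2 := by
    have h1 := Finset.sum_sq_le_sum_mul_sum_of_sq_le_mul (Finset.univ : Finset (Fin n × Fin n))
      (r := fun p => |J p.1 p.2| * |κ p.1 p.2|) (f := fun p => |J p.1 p.2|)
      (g := fun p => |J p.1 p.2| * κ p.1 p.2 ^ 2)
      (fun p _ => abs_nonneg _) (fun p _ => mul_nonneg (abs_nonneg _) (sq_nonneg _))
      (fun p _ => le_of_eq (by rw [mul_pow, sq_abs (κ _ _)]; ring))
    simp only [Fintype.sum_prod_type] at h1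
    have h2 : ∑ i, ∑ j, |J i j| * κ i j ^ 2 ≤ ∑ i, ∑ j, (JT J / n ^ 2 / Δ) * κ i j ^ 2 := by
      apply Finset.sum_le_sum; intro i _
      apply Finset.sum_le_sum; intro j _
      by_cases hij : i = j
      · simp [hκ, hij]
      · apply mul_le_mul_of_nonneg_right _ (sq_nonneg _)
        rw [le_div_iff₀ hΔ, mul_comm]; exact hJ i j hij
    simp only [← Finset.mul_sum] at h2
    have h3 : (JT J / n ^ 2 / Δ) * ∑ i, ∑ j, κ i j ^ 2 ≤ (JT J / n ^ 2 / Δ) * ((n : ℝ) ^ 2 / k) :=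
      mul_le_mul_of_nonneg_left hκsum (by positivity)
    have h4 : (JT J / n ^ 2 / Δ) * ((n : ℝ) ^ 2 / k) = JT J * (1 / (Δ * k)) := by
      field_simp
    have h5 : 1 / (Δ * k) ≤ ε ^ 2 := by
      rw [div_le_iff₀ (by positivity)] at hkε ⊢
      linarith
    calc _ ≤ _ := h1
      _ ≤ JT J * (JT J * ε ^ 2) := by
        apply mul_le_mul_of_nonneg_left _ hJT
        exact (h2.trans h3).trans (h4.le.trans (mul_le_mul_of_nonneg_left h5 hJT))
      _ = _ := by ring
  have hfin := abs_le_of_sq_le_sq hcs (by positivity)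
  have : ∑ i, ∑ j, J i j * κ i j ≤ ∑ i, ∑ j, |J i j| * |κ i j| := by
    apply Finset.sum_le_sum; intro i _
    apply Finset.sum_le_sum; intro j _
    rw [← abs_mul]; exact le_abs_self _
  have h6 := (abs_le.mp hfin).2
  simp only [e, mul_add, Finset.sum_add_distrib]
  linarith

end

/-- Gibbs' inequality. -/
lemma gibbs {D : Type*} [Fintype D] (q r : D → ℝ) (hq : ∀ d, 0 ≤ q d) (hr : ∀ d, 0 ≤ r d)
    (hqr : ∀ d, q d ≠ 0 → r d ≠ 0) (hs : ∑ d, r d ≤ ∑ d, q d) :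
    ∑ d, q d * Real.log (r d) ≤ ∑ d, q d * Real.log (q d) := by
  have : ∀ d, q d * Real.log (r d) - q d * Real.log (q d) ≤ r d - q d := by
    intro d
    by_cases h : q d = 0
    · simp [h, hr d]
    · have h1 : 0 < q d := lt_of_le_of_ne (hq d) (Ne.symm h)
      have h2 : 0 < r d := lt_of_le_of_ne (hr d) (Ne.symm (hqr d h))
      have := Real.log_le_sub_one_of_pos (div_pos h2 h1)
      rw [Real.log_div h2.ne' h1.ne'] at this
      have h3 := mul_le_mul_of_nonneg_left this h1.le
      have h4 : q d * (r d / q d - 1) = r d - q d := by field_simp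
      linarith
  have h := Finset.sum_le_sum fun d (_ : d ∈ Finset.univ) => this d
  rw [Finset.sum_sub_distrib, Finset.sum_sub_distrib] at h
  linarith

/-! ### Lifting Sherali–Adams families -/

/-- Restriction of a point of the cube to `S`. -/
def rs (S : Finset (Fin n)) (x : Cube n) : Asg S := fun i => x i.1

lemma rs_fl {S : Finset (Fin n)} {j : Fin n} (hj : j ∉ S) (x : Cube n) :
    rs S (fl j x) = rs S x := by
  funext i
  exact fl_ne (ne_of_mem_of_not_mem i.2 hj) x

lemma lift_sum (S : Finset (Fin n)) (g : Asg S → ℝ) :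
    ∑ x : Cube n, (2 : ℝ) ^ S.card / 2 ^ n * g (rs S x) = ∑ y, g y := by
  rw [← Finset.mul_sum]
  have h := Equiv.sum_comp (Equiv.piEquivPiSubtypeProd (fun i : Fin n => i ∈ S) (fun _ => ↥B))
    (fun p => g p.1)
  have h1 : ∑ x : Cube n, g (rs S x) =
      ∑ p : (({i : Fin n // i ∈ S} → ↥B) × ({i : Fin n // i ∉ S} → ↥B)), g p.1 := h
  rw [h1, Fintype.sum_prod_type]
  simp only [Finset.sum_const, Finset.card_univ, nsmul_eq_mul]
  rw [← Finset.mul_sum, Fintype.card_fun, cardB, Fintype.card_subtype_compl, Fintype.card_fin,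
    Fintype.card_coe, ← mul_assoc]
  have hle : S.card ≤ n := by simpa using Finset.card_le_univ S
  have : (2 : ℝ) ^ S.card / 2 ^ n * ((2 ^ (n - S.card) : ℕ) : ℝ) = 1 := by
    push_cast
    rw [div_mul_eq_mul_div, ← pow_add, Nat.add_sub_cancel' hle, div_self (by positivity)]
  rw [this, one_mul]

section
variable {K : ℕ} (F : SAFamily n K)

/-- Lift of `μ_S` to a distribution on the cube. -/
def Wf (S : Finset (Fin n)) (x : Cube n) : ℝ := (2 : ℝ) ^ S.card / 2 ^ n * F.μ S (rs S x)

lemma F_cons (S : Finset (Fin n)) (j : Fin n) (hj : j ∉ S) (hc : S.card + 1 ≤ K) (x : Cube n) :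
    F.μ S (rs S x) = F.μ (insert j S) (rs _ x) + F.μ (insert j S) (rs _ (fl j x)) := by
  have h := F.consistent (insert j S) S
    (by rw [Finset.union_eq_left.mpr (Finset.subset_insert j S),
      Finset.card_insert_of_notMem hj]; exact hc) (rs _ x)
  have e2 : margTo (F.μ S) (Finset.inter_subset_right : insert j S ∩ S ⊆ S) (rs _ x)
      = F.μ S (rs S x) := by
    unfold margTo
    rw [Finset.sum_eq_single (rs S x)]
    · rw [if_pos]; rfl
    · intro y _ hy
      rw [if_neg]
      intro h2
      apply hy
      funext i
      exact congrFun h2 ⟨i.1, by simp⟩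
    · simp
  have hne : rs (insert j S) x ≠ rs (insert j S) (fl j x) := by
    intro h2
    have h3 : x j = fl j x j := congrFun h2 ⟨j, by simp⟩
    simp only [fl, Function.update_self] at h3
    exact ne_nb _ h3
  have e1 : margTo (F.μ (insert j S)) (Finset.inter_subset_left : insert j S ∩ S ⊆ insert j S)
      (rs _ x) = F.μ (insert j S) (rs _ x) + F.μ (insert j S) (rs _ (fl j x)) := by
    unfold margTo
    rw [← Finset.sum_pair (f := F.μ (insert j S)) hne, ← Finset.sum_filter]
    apply Finset.sum_congr _ (fun _ _ => rfl)
    ext y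
    simp only [Finset.mem_filter, Finset.mem_univ, true_and, Finset.mem_insert,
      Finset.mem_singleton]
    constructor
    · intro hy
      have hy' : ∀ (i : Fin n) (hi : i ∈ S), y ⟨i, by simp [hi]⟩ = x i := fun i hi =>
        congrFun hy ⟨i, by simp [hi]⟩
      rcases eq_or_nb (y ⟨j, by simp⟩) (x j) with h3 | h3
      · left
        funext i
        obtain ⟨i, hi⟩ := i
        rcases Finset.mem_insert.mp hi with h4 | h4
        · subst h4; exact h3
        · exact hy' i h4
      · right
        funext i
        obtain ⟨i, hi⟩ := i
        rcases Finset.mem_insert.mp hi with h4 | h4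
        · subst h4; rw [h3]; simp [rs, fl]
        · rw [hy' i h4]; exact (fl_ne (ne_of_mem_of_not_mem h4 hj) x).symm
    · rintro (rfl | rfl)
      · rfl
      · funext i
        exact fl_ne (ne_of_mem_of_not_mem (Finset.mem_inter.mp i.2).2 hj) x
  rw [e1, e2] at h
  exact h.symm

lemma Wf_WF : WF n K (Wf F) where
  nonneg S hS x := mul_nonneg (by positivity) (F.nonneg S hS _)
  sum_one S hS := by
    unfold Wf
    rw [lift_sum S (F.μ S), F.sum_one S hS]
  inv S j hj x := by simp only [Wf, rs_fl hj]
  cons S j hj hc x := by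
    simp only [Wf]
    rw [F_cons F S j hj hc x, Finset.card_insert_of_notMem hj, pow_succ]
    ring

lemma pairExp_eq (i j : Fin n) :
    pairExp F i j = ∑ x, Wf F {i, j} x * ((x i : ℝ) * (x j : ℝ)) := by
  unfold pairExp
  rw [← lift_sum]
  apply Finset.sum_congr rfl
  intro x _
  simp only [Wf, rs]
  ring

lemma ent_eq (S : Finset (Fin n)) :
    ent (F.μ S) = -∑ x, Wf F S x * Real.log (F.μ S (rs S x)) := by
  unfold ent
  rw [← lift_sum]
  congr 1
  apply Finset.sum_congr rfl
  intro x _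
  simp only [Wf]
  ring

lemma ext_rs (S : Finset (Fin n)) (i : Fin n) (x : Cube n) :
    extAsg i (rs S x) (x i) = rs (insert i S) x := by
  funext l
  unfold extAsg
  split_ifs with h
  · simp only [rs, h]
  · rfl

lemma condEnt_eq (S : Finset (Fin n)) (i : Fin n) (hi : i ∉ S) (hc : S.card + 1 ≤ K) :
    condEnt F S i = -∑ x, Wf F (insert i S) x *
      Real.log (F.μ (insert i S) (rs _ x) / F.μ S (rs S x)) := by
  unfold condEnt
  rw [← lift_sum, sum_avg i]
  rw [sum_avg i (fun x => Wf F (insert i S) x *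
      Real.log (F.μ (insert i S) (rs _ x) / F.μ S (rs S x))), ← Finset.sum_neg_distrib]
  apply Finset.sum_congr rfl
  intro x _
  have h0 : F.μ S (rs S x) = 0 → F.μ (insert i S) (rs _ x) = 0 ∧
      F.μ (insert i S) (rs _ (fl i x)) = 0 := by
    intro h
    have hc' : (insert i S).card ≤ K := by rw [Finset.card_insert_of_notMem hi]; exact hc
    have h1 := F_cons F S i hi hc x
    have h2 := F.nonneg _ hc' (rs _ x)
    have h3 := F.nonneg _ hc' (rs _ (fl i x))
    constructor <;> linarith
  have hext : extAsg i (rs S x) (nb (x i)) = rs (insert i S) (fl i x) := by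
    rw [← ext_rs S i (fl i x), rs_fl hi]
    simp [fl]
  simp only [rs_fl hi, ent]
  rw [sumB _ (x i), ext_rs, hext]
  simp only [Wf, rs_fl hi, Finset.card_insert_of_notMem hi, pow_succ]
  by_cases h : F.μ S (rs S x) = 0
  · simp [h]
  · field_simp
    ring

lemma nu_eq (S : Finset (Fin n)) (x : Cube n) :
    nu (Wf F) S Sᶜ x =
      F.μ S (rs S x) * ∏ i ∈ Sᶜ, (F.μ (insert i S) (rs _ x) / F.μ S (rs S x)) := by
  unfold nu
  have : ∏ i ∈ Sᶜ, (Wf F (insert i S) x / Wf F S x) =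
      ∏ i ∈ Sᶜ, (2 * (F.μ (insert i S) (rs _ x) / F.μ S (rs S x))) := by
    apply Finset.prod_congr rfl
    intro i hi
    simp only [Finset.mem_compl] at hi
    simp only [Wf, Finset.card_insert_of_notMem hi, pow_succ]
    by_cases h : F.μ S (rs S x) = 0
    · simp [h]
    · field_simp
  rw [this, Finset.prod_mul_distrib, Finset.prod_const, Wf]
  have hle : S.card ≤ n := by simpa using Finset.card_le_univ S
  have h2 : (2 : ℝ) ^ S.card / 2 ^ n * 2 ^ (Sᶜ.card) = 1 := by
    rw [Finset.card_compl, Fintype.card_fin, div_mul_eq_mul_div, ← pow_add,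
      Nat.add_sub_cancel' hle, div_self (by positivity)]
  linear_combination (F.μ S (rs S x) *
    ∏ i ∈ Sᶜ, (F.μ (insert i S) (rs _ x) / F.μ S (rs S x))) * h2

/-- Cross entropy with respect to the rounded distribution. -/
lemma cross_ent (S : Finset (Fin n)) (hc : S.card + 1 ≤ K) (q : Cube n → ℝ)
    (hq : ∀ x, q x ≠ 0 → nu (Wf F) S Sᶜ x ≠ 0)
    (ha : ∑ x, q x * Real.log (F.μ S (rs S x)) = ∑ x, Wf F S x * Real.log (F.μ S (rs S x)))
    (hb : ∀ i, i ∉ S →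
      ∑ x, q x * Real.log (F.μ (insert i S) (rs _ x) / F.μ S (rs S x)) =
      ∑ x, Wf F (insert i S) x * Real.log (F.μ (insert i S) (rs _ x) / F.μ S (rs S x))) :
    -∑ x, q x * Real.log (nu (Wf F) S Sᶜ x) = ent (F.μ S) + ∑ i ∈ Sᶜ, condEnt F S i := by
  have e : ∑ i ∈ Sᶜ, condEnt F S i = -∑ i ∈ Sᶜ, ∑ x, q x *
      Real.log (F.μ (insert i S) (rs _ x) / F.μ S (rs S x)) := by
    rw [← Finset.sum_neg_distrib]
    apply Finset.sum_congr rfl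
    intro i hi
    simp only [Finset.mem_compl] at hi
    rw [condEnt_eq F S i hi hc, hb i hi]
  rw [e, ent_eq, ← ha, Finset.sum_comm, ← neg_add, ← Finset.sum_add_distrib]
  congr 1
  apply Finset.sum_congr rfl
  intro x _
  by_cases h : q x = 0
  · simp [h]
  · have h1 := hq x h
    rw [nu_eq] at h1 ⊢
    rw [Real.log_mul (left_ne_zero_of_mul h1) (right_ne_zero_of_mul h1),
      Real.log_prod (fun i hi => (Finset.prod_ne_zero_iff.mp (right_ne_zero_of_mul h1)) i hi),
      mul_add, Finset.mul_sum]

lemma pseudoEnt_le (k' : ℕ) (S : Finset (Fin n)) (hS : S.card ≤ k') :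
    pseudoEnt F k' ≤ ent (F.μ S) + ∑ i ∈ Sᶜ, condEnt F S i :=
  Finset.inf'_le (fun S => ent (F.μ S) + ∑ i ∈ Sᶜ, condEnt F S i) (by simp [hS])

end

/-- The energy. -/
def En (J : Fin n → Fin n → ℝ) (x : Cube n) : ℝ :=
  ∑ i : Fin n, ∑ j : Fin n, J i j * (x i : ℝ) * (x j : ℝ)

lemma sum_En (J : Fin n → Fin n → ℝ) (q : Cube n → ℝ) :
    ∑ x, q x * En J x = ∑ i, ∑ j, J i j * ∑ x, q x * ((x i : ℝ) * (x j : ℝ)) := by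
  simp only [En, Finset.mul_sum]
  rw [Finset.sum_comm]
  apply Finset.sum_congr rfl
  intro i _
  rw [Finset.sum_comm]
  apply Finset.sum_congr rfl
  intro j _
  apply Finset.sum_congr rfl
  intro x _
  ring

lemma Z_pos (J : Fin n → Fin n → ℝ) : 0 < ∑ x : Cube n, Real.exp (En J x) :=
  Finset.sum_pos (fun _ _ => Real.exp_pos _) ⟨fun _ => ⟨1, by simp [B]⟩, Finset.mem_univ _⟩

lemma variational (J : Fin n → Fin n → ℝ) (q : Cube n → ℝ) (hq : ∀ x, 0 ≤ q x)
    (hs : ∑ x, q x = 1) :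
    ∑ x, q x * En J x - ∑ x, q x * Real.log (q x) ≤
      Real.log (∑ x : Cube n, Real.exp (En J x)) := by
  have hZ := Z_pos J
  have h := gibbs q (fun x => Real.exp (En J x) / ∑ x : Cube n, Real.exp (En J x)) hq
    (fun x => by positivity) (fun x _ => by positivity)
    (by rw [hs, ← Finset.sum_div, div_self hZ.ne'])
  simp only [Real.log_div (Real.exp_pos _).ne' hZ.ne', Real.log_exp, mul_sub,
    Finset.sum_sub_distrib, ← Finset.sum_mul, hs, one_mul] at h
  linarith

lemma upper {k : ℕ} (hn : 1 ≤ n) (hk : 1 ≤ k) {Δ ε : ℝ} (hΔ : 0 < Δ)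
    (hε : 0 < ε) (hkε : 1 / (Δ * ε ^ 2) ≤ k) (J : Fin n → Fin n → ℝ)
    (hJ : ∀ i j : Fin n, i ≠ j → Δ * |J i j| ≤ JT J / (n : ℝ) ^ 2) (F : SAFamily n (k + 2)) :
    (∑ i : Fin n, ∑ j : Fin n, J i j * pairExp F i j) + pseudoEnt F k ≤
      Real.log (∑ x : Cube n, Real.exp (En J x)) + ε * JT J := by
  have hW := Wf_WF F
  obtain ⟨S, hS, hgood⟩ := exists_good hn hk hW
  have h1 := energy hn hk hW hΔ hε hkε J hJ hS hgood
  have h2 := pseudoEnt_le F k S hS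
  have h3 := cross_ent F S (by omega) (nu (Wf F) S Sᶜ) (fun x h => h)
    (nu_marg0 hW (by omega) _ (fun j hj x => by rw [rs_fl hj]))
    (fun i hi => nu_marg1 hW (by omega) hi _ (fun j hj x => by
      rw [rs_fl hj, rs_fl (fun h => hj (by simp [h]))]))
  have h4 := variational J (nu (Wf F) S Sᶜ) (nu_nonneg hW (by omega)) (nu_sum hW (by omega))
  rw [sum_En] at h4
  simp only [pairExp_eq]
  linarith

/-- The SA family of marginals of a genuine distribution. -/
def margFam (K : ℕ) (p : Cube n → ℝ) (hp : ∀ x, 0 ≤ p x) (hs : ∑ x, p x = 1) :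
    SAFamily n K where
  μ S y := ∑ x, if rs S x = y then p x else 0
  nonneg S _ y := Finset.sum_nonneg fun x _ => by split_ifs <;> simp [hp]
  sum_one S _ := by
    rw [Finset.sum_comm, ← hs]
    apply Finset.sum_congr rfl
    intro x _
    simp
  consistent S T _ z := by
    have key : ∀ {R S : Finset (Fin n)} (h : R ⊆ S) (z : Asg R),
        margTo (fun y : Asg S => ∑ x, if rs S x = y then p x else 0) h z =
          ∑ x, if rs R x = z then p x else 0 := by
      intro R S h z
      unfold margTo
      have : ∀ y : Asg S, (if res h y = z then ∑ x, (if rs S x = y then p x else 0) else 0) =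
          ∑ x, if rs S x = y then (if rs R x = z then p x else 0) else 0 := by
        intro y
        split_ifs with h1
        · apply Finset.sum_congr rfl
          intro x _
          split_ifs with h2 h3 h3
          · rfl
          · exact absurd (by rw [← h1, ← h2]; rfl) h3
          · rfl
        · symm
          apply Finset.sum_eq_zero
          intro x _
          split_ifs with h2 h3
          · exact absurd (by rw [← h3, ← h2]; rfl) h1
          · rfl
          · rfl
      simp only [this]
      rw [Finset.sum_comm]
      apply Finset.sum_congr rfl
      intro x _
      simp
    rw [key, key]

lemma marg_sum (K : ℕ) (p : Cube n → ℝ) (hp : ∀ x, 0 ≤ p x) (hs : ∑ x, p x = 1)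
    (S : Finset (Fin n)) (h : Asg S → ℝ) :
    ∑ x, Wf (margFam K p hp hs) S x * h (rs S x) = ∑ x, p x * h (rs S x) := by
  simp only [Wf, mul_assoc]
  rw [lift_sum S (fun y => (margFam K p hp hs).μ S y * h y)]
  simp only [margFam, Finset.sum_mul]
  rw [Finset.sum_comm]
  apply Finset.sum_congr rfl
  intro x _
  simp [ite_mul]

lemma lower (k : ℕ) (J : Fin n → Fin n → ℝ) : ∃ F : SAFamily n (k + 2),
    Real.log (∑ x : Cube n, Real.exp (En J x)) ≤
    (∑ i : Fin n, ∑ j : Fin n, J i j * pairExp F i j) + pseudoEnt F k := by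
  have hZ := Z_pos J
  set Z := ∑ x : Cube n, Real.exp (En J x) with hZdef
  set p : Cube n → ℝ := fun x => Real.exp (En J x) / Z with hpdef
  have hp0 : ∀ x, 0 < p x := fun x => by positivity
  have hp : ∀ x, 0 ≤ p x := fun x => (hp0 x).le
  have hs : ∑ x, p x = 1 := by rw [hpdef, ← Finset.sum_div, div_self hZ.ne']
  set F := margFam (k + 2) p hp hs with hF
  have hW := Wf_WF F
  have hpos : ∀ (S : Finset (Fin n)) (x : Cube n), 0 < F.μ S (rs S x) := by
    intro S x
    have h : ∀ x' ∈ Finset.univ, 0 ≤ (if rs S x' = rs S x then p x' else 0) := fun x' _ => by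
      split_ifs <;> simp [hp]
    have h1 := Finset.single_le_sum h (Finset.mem_univ x)
    simp only [if_true] at h1
    exact (hp0 x).trans_le h1
  refine ⟨F, ?_⟩
  have hlog : Real.log Z = ∑ x, p x * En J x - ∑ x, p x * Real.log (p x) := by
    simp only [hpdef]
    simp only [Real.log_div (Real.exp_pos _).ne' hZ.ne', Real.log_exp, mul_sub,
      Finset.sum_sub_distrib, ← Finset.sum_mul]
    have : ∑ x, Real.exp (En J x) / Z = 1 := hs
    rw [this]; ring
  have hen : ∑ x, p x * En J x = ∑ i : Fin n, ∑ j : Fin n, J i j * pairExp F i j := by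
    rw [sum_En]
    apply Finset.sum_congr rfl; intro i _
    apply Finset.sum_congr rfl; intro j _
    rw [pairExp_eq]
    have := marg_sum (k + 2) p hp hs {i, j}
      (fun y => (y ⟨i, by simp⟩ : ℝ) * (y ⟨j, by simp⟩ : ℝ))
    simp only [rs] at this
    rw [← this]
  have hent : -∑ x, p x * Real.log (p x) ≤ pseudoEnt F k := by
    unfold pseudoEnt
    apply Finset.le_inf'
    intro S hS
    have hS' : S.card ≤ k := by simpa using hS
    have hnu : ∀ x, nu (Wf F) S Sᶜ x ≠ 0 := by
      intro x
      rw [nu_eq]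
      exact mul_ne_zero (hpos S x).ne' (Finset.prod_ne_zero_iff.mpr fun i _ =>
        (div_pos (hpos _ x) (hpos S x)).ne')
    rw [← cross_ent F S (by omega) p (fun x _ => hnu x)]
    · have := gibbs p (nu (Wf F) S Sᶜ) hp (nu_nonneg hW (by omega)) (fun x _ => hnu x)
        (by rw [hs, nu_sum hW (by omega)])
      linarith
    · exact (marg_sum (k + 2) p hp hs S (fun y => Real.log (F.μ S y))).symm
    · intro i _
      exact (marg_sum (k + 2) p hp hs (insert i S) (fun y =>
        Real.log (F.μ (insert i S) y / F.μ S (res (Finset.subset_insert i S) y)))).symm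
  rw [hlog, ← hen]
  linarith

/-- Main theorem, dense case: there is a universal constant `C > 0` such that for
any `Δ`-dense Ising model and `ε ∈ (0,1)`, taking `k = ⌈C/(Δε²)⌉`, the value `V`
of the level-`(k+2)` Sherali–Adams relaxation with the augmented mean-field
pseudo-entropy (at level `k`) satisfies `log Z ≤ V ≤ log Z + ε J_T`. -/
theorem dense_ising_SA_approximation :
    ∃ C : ℝ, 0 < C ∧
      ∀ n : ℕ, 1 ≤ n → ∀ Δ ε : ℝ, Δ ∈ Set.Ioc (0 : ℝ) 1 → ε ∈ Set.Ioo (0 : ℝ) 1 →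
        ∀ J : Fin n → Fin n → ℝ,
          (∀ i j : Fin n, i ≠ j → Δ * |J i j| ≤ JT J / (n : ℝ) ^ 2) →
          ∀ Z : ℝ, Z = ∑ x : Cube n,
              Real.exp (∑ i : Fin n, ∑ j : Fin n, J i j * (x i : ℝ) * (x j : ℝ)) →
          ∀ k : ℕ, k = ⌈C / (Δ * ε ^ 2)⌉₊ →
          ∀ V : ℝ, V = sSup {v : ℝ | ∃ F : SAFamily n (k + 2),
              v = (∑ i : Fin n, ∑ j : Fin n, J i j * pairExp F i j) + pseudoEnt F k} →
          Real.log Z ≤ V ∧ V ≤ Real.log Z + ε * JT J := by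
  refine ⟨1, one_pos, ?_⟩
  intro n hn Δ ε hΔ hε J hJ Z hZ k hk V hV
  have hpos : 0 < 1 / (Δ * ε ^ 2) := by
    have := hΔ.1
    have := hε.1
    positivity
  have hkε : 1 / (Δ * ε ^ 2) ≤ (k : ℝ) := by rw [hk]; exact Nat.le_ceil _
  have hk1 : 1 ≤ k := by
    have : (0 : ℝ) < k := hpos.trans_le hkε
    exact_mod_cast this
  have hZ' : Z = ∑ x : Cube n, Real.exp (En J x) := hZ
  have hub := fun F => upper hn hk1 hΔ.1 hε.1 hkε J hJ F
  obtain ⟨F0, hF0⟩ := lower k J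
  rw [hV, hZ']
  constructor
  · refine hF0.trans (le_csSup ⟨Real.log (∑ x : Cube n, Real.exp (En J x)) + ε * JT J, ?_⟩
      ⟨F0, rfl⟩)
    rintro v ⟨F, rfl⟩
    exact hub F
  · refine csSup_le (Set.nonempty_of_mem ⟨F0, rfl⟩) ?_
    rintro v ⟨F, rfl⟩
    exact hub F
end
end

section
/- (Correlation rounding on low threshold rank models.) There exists a universal constant c > 0 such that the following holds. Let n ≥ 1, ε ∈ (0,1), let J : Fin n → Fin n → ℝ be symmetric and regular with Σ_j |J i j| = J' > 0 for every i, and let A be the matrix A i j = |J i j|/J'. Let rank(τ) denote the number of eigenvalues of A (with multiplicity) that are ≥ τ, and set t = ⌈rank(c·ε²)/(c·ε²)⌉. Let (μ_S, v_{S,α}) be a level-(t+2) Lasserre solution on Fin n. Then there exists S ⊆ Fin n with |S| ≤ t such that | Σ_{i,j} J i j · Σ_{x_S} μ_S(x_S) · ( E[x i · x j | x_S] − E[x i | x_S]·E[x j | x_S] ) | ≤ ε·n·J', where the conditional expectations are computed from μ_{S∪{i,j}}, μ_{S∪{i}}, μ_{S∪{j}} (terms with μ_S(x_S) = 0 contribute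 0). -/
open scoped BigOperators

noncomputable section

open scoped RealInnerProductSpace

/-- A level-`k` Lasserre solution on `Fin n`: a level-`k` Sherali–Adams
consistent family together with vectors `v_{S,α}` in a finite-dimensional real
inner product space whose inner products realize the joint local probabilities:
`⟪v_{S,α}, v_{T,β}⟫ = Pr_{μ_{S∪T}}[x_S = α ∧ x_T = β]` whenever `|S ∪ T| ≤ k`. -/
structure LasserreSol (n k : ℕ) extends SAFamily n k where
  dim : ℕ
  vec : (S : Finset (Fin n)) → Asg S → EuclideanSpace ℝ (Fin dim)
  inner_eq : ∀ S T : Finset (Fin n), (S ∪ T).card ≤ k →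
    ∀ (α : Asg S) (β : Asg T),
      ⟪vec S α, vec T β⟫ = ∑ y : Asg (S ∪ T),
        if res Finset.subset_union_left y = α ∧ res Finset.subset_union_right y = β
        then toSAFamily.μ (S ∪ T) y else 0

/-- The `τ`-threshold rank of a Hermitian (real symmetric) matrix `A`: the number
of eigenvalues of `A`, counted with multiplicity, that are at least `τ`. -/
def thresholdRank {n : ℕ} {A : Matrix (Fin n) (Fin n) ℝ} (hA : A.IsHermitian)
    (τ : ℝ) : ℕ :=
  (Finset.univ.filter (fun i : Fin n => τ ≤ hA.eigenvalues i)).card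


/-! ### Local expectations -/

/-- Extend an assignment on `U` to all coordinates by `1`. -/
def extU {n : ℕ} (U : Finset (Fin n)) (z : Asg U) : Fin n → ℝ :=
  fun i => if h : i ∈ U then (z ⟨i, h⟩ : ℝ) else 1

/-- Local expectation. -/
def EE {n k : ℕ} (F : SAFamily n k) (U : Finset (Fin n)) (g : (Fin n → ℝ) → ℝ) : ℝ :=
  ∑ z : Asg U, F.μ U z * g (extU U z)

/-- `g` depends only on the coordinates in `R`. -/
def DepOn {n : ℕ} (R : Finset (Fin n)) (g : (Fin n → ℝ) → ℝ) : Prop :=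
  ∀ x x' : Fin n → ℝ, (∀ i ∈ R, x i = x' i) → g x = g x'

/-- Indicator of `x_S = α`. -/
def ind {n : ℕ} (S : Finset (Fin n)) (α : Asg S) (x : Fin n → ℝ) : ℝ :=
  open Classical in if ∀ i : S, x i = (α i : ℝ) then 1 else 0

lemma res_extU {n : ℕ} {R U : Finset (Fin n)} (h : R ⊆ U) (z : Asg U) :
    ∀ i ∈ R, extU U z i = extU R (res h z) i := by
  intro i hi
  simp [extU, hi, h hi, res]

lemma ind_extU {n : ℕ} {R U : Finset (Fin n)} (h : R ⊆ U) (z : Asg U) (α : Asg R) :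
    ind R α (extU U z) = if res h z = α then 1 else 0 := by
  unfold ind
  congr 1
  apply propext
  constructor
  · intro H
    funext i
    apply Subtype.ext
    rw [← H i]
    simp [extU, h i.2, res]
  · intro H i
    rw [← H]
    simp [extU, h i.2, res]

lemma margTo_self_aux {n : ℕ} {R W U : Finset (Fin n)} (μU : Asg U → ℝ) (μR : Asg R → ℝ)
    (hW : W = R) (h1 : W ⊆ U) (h2 : W ⊆ R) (h : R ⊆ U)
    (H : ∀ z, margTo μU h1 z = margTo μR h2 z) (z : Asg R) : margTo μU h z = μR z := by
  subst hW
  rw [H]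
  unfold margTo
  have : ∀ y : Asg W, res h2 y = y := fun y => rfl
  simp [this]

lemma marg_eq {n k : ℕ} (F : SAFamily n k) {R U : Finset (Fin n)} (h : R ⊆ U) (hU : U.card ≤ k)
    (z : Asg R) : margTo (F.μ U) h z = F.μ R z := by
  refine margTo_self_aux (F.μ U) (F.μ R) (Finset.inter_eq_right.mpr h) Finset.inter_subset_left
    Finset.inter_subset_right h ?_ z
  apply F.consistent
  rwa [Finset.union_eq_left.mpr h]

lemma EE_mono {n k : ℕ} (F : SAFamily n k) {R U : Finset (Fin n)} (h : R ⊆ U) (hU : U.card ≤ k)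
    {g : (Fin n → ℝ) → ℝ} (hg : DepOn R g) : EE F U g = EE F R g := by
  unfold EE
  have h1 : ∀ y : Asg R, F.μ R y = ∑ z : Asg U, if res h z = y then F.μ U z else 0 :=
    fun y => (marg_eq F h hU y).symm
  simp_rw [h1, Finset.sum_mul]
  rw [Finset.sum_comm]
  refine Finset.sum_congr rfl fun z _ => ?_
  simp only [ite_mul, zero_mul, Finset.sum_ite_eq, Finset.mem_univ, if_true]
  rw [hg _ _ (res_extU h z)]

lemma EE_eq {n k : ℕ} (F : SAFamily n k) {R U V : Finset (Fin n)} (h : R ⊆ U) (hU : U.card ≤ k)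
    (h' : R ⊆ V) (hV : V.card ≤ k)
    {g : (Fin n → ℝ) → ℝ} (hg : DepOn R g) : EE F U g = EE F V g := by
  rw [EE_mono F h hU hg, EE_mono F h' hV hg]

section basic
variable {n k : ℕ} (F : SAFamily n k) (U : Finset (Fin n))

lemma EE_add (f g : (Fin n → ℝ) → ℝ) : EE F U (fun x => f x + g x) = EE F U f + EE F U g := by
  simp [EE, mul_add, Finset.sum_add_distrib]

lemma EE_sub (f g : (Fin n → ℝ) → ℝ) : EE F U (fun x => f x - g x) = EE F U f - EE F U g := by
  simp [EE, mul_sub, Finset.sum_sub_distrib]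

lemma EE_smul (c : ℝ) (f : (Fin n → ℝ) → ℝ) : EE F U (fun x => c * f x) = c * EE F U f := by
  simp only [EE, Finset.mul_sum]
  exact Finset.sum_congr rfl fun z _ => by ring

lemma EE_sum {ι : Type*} (s : Finset ι) (f : ι → (Fin n → ℝ) → ℝ) :
    EE F U (fun x => ∑ i ∈ s, f i x) = ∑ i ∈ s, EE F U (f i) := by
  simp only [EE, Finset.mul_sum]
  rw [Finset.sum_comm]

lemma EE_nonneg (hU : U.card ≤ k) (f : (Fin n → ℝ) → ℝ) (hf : ∀ x, 0 ≤ f x) : 0 ≤ EE F U f :=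
  Finset.sum_nonneg fun z _ => mul_nonneg (F.nonneg U hU z) (hf _)

lemma EE_congr {f g : (Fin n → ℝ) → ℝ} (h : ∀ z : Asg U, f (extU U z) = g (extU U z)) :
    EE F U f = EE F U g :=
  Finset.sum_congr rfl fun z _ => by rw [h]

lemma EE_one (hU : U.card ≤ k) : EE F U (fun _ => 1) = 1 := by
  simp [EE, F.sum_one U hU]

end basic

lemma B_sq (a : ↥B) : (a : ℝ) * a = 1 := by
  rcases a with ⟨a, ha⟩
  simp only [B, Finset.mem_insert, Finset.mem_singleton] at ha
  rcases ha with rfl | rfl <;> norm_num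

lemma extU_sq {n : ℕ} (U : Finset (Fin n)) (z : Asg U) (i : Fin n) :
    extU U z i * extU U z i = 1 := by
  unfold extU
  split_ifs with h
  · exact B_sq _
  · norm_num

lemma dep_ind {n : ℕ} (S : Finset (Fin n)) (α : Asg S) : DepOn S (ind S α) := by
  intro x x' h
  unfold ind
  have : ∀ i : S, x i = x' i := fun i => h i i.2
  simp [this]

lemma DepOn.mono {n : ℕ} {S T : Finset (Fin n)} {g : (Fin n → ℝ) → ℝ} (h : DepOn S g)
    (hST : S ⊆ T) : DepOn T g := fun x x' hx => h x x' fun i hi => hx i (hST hi)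

lemma dep_coord {n : ℕ} {S : Finset (Fin n)} {i : Fin n} (h : i ∈ S) :
    DepOn S (fun x => x i) := fun _ _ hx => hx i h

lemma DepOn.mul {n : ℕ} {S : Finset (Fin n)} {f g : (Fin n → ℝ) → ℝ} (hf : DepOn S f)
    (hg : DepOn S g) : DepOn S (fun x => f x * g x) := fun x x' hx => by
  simp only [hf x x' hx, hg x x' hx]

lemma DepOn.add {n : ℕ} {S : Finset (Fin n)} {f g : (Fin n → ℝ) → ℝ} (hf : DepOn S f)
    (hg : DepOn S g) : DepOn S (fun x => f x + g x) := fun x x' hx => by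
  simp only [hf x x' hx, hg x x' hx]

lemma DepOn.sub {n : ℕ} {S : Finset (Fin n)} {f g : (Fin n → ℝ) → ℝ} (hf : DepOn S f)
    (hg : DepOn S g) : DepOn S (fun x => f x - g x) := fun x x' hx => by
  simp only [hf x x' hx, hg x x' hx]

lemma DepOn.smul {n : ℕ} {S : Finset (Fin n)} (c : ℝ) {g : (Fin n → ℝ) → ℝ}
    (hg : DepOn S g) : DepOn S (fun x => c * g x) := fun x x' hx => by
  simp only [hg x x' hx]

lemma DepOn.sum {n : ℕ} {S : Finset (Fin n)} {ι : Type*} (s : Finset ι)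
    {f : ι → (Fin n → ℝ) → ℝ} (hf : ∀ i, DepOn S (f i)) :
    DepOn S (fun x => ∑ i ∈ s, f i x) := fun x x' hx =>
  Finset.sum_congr rfl fun i _ => hf i x x' hx

lemma ind_nonneg {n : ℕ} (S : Finset (Fin n)) (α : Asg S) (x) : 0 ≤ ind S α x := by
  unfold ind; split_ifs <;> norm_num

lemma EE_ind {n k : ℕ} (F : SAFamily n k) {S U : Finset (Fin n)} (h : S ⊆ U) (hU : U.card ≤ k)
    (α : Asg S) : EE F U (ind S α) = F.μ S α := by
  rw [EE_mono F h hU (dep_ind S α)]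
  unfold EE
  have : ∀ z : Asg S, ind S α (extU S z) = if z = α then 1 else 0 := fun z =>
    ind_extU (Finset.Subset.refl S) z α
  simp [this]

/-- Any function that is bounded by `1` on the local cube has zero expectation on null events. -/
lemma EE_ind_zero {n k : ℕ} (F : SAFamily n k) {S U : Finset (Fin n)} (h : S ⊆ U)
    (hU : U.card ≤ k) (α : Asg S) (h0 : F.μ S α = 0) (g : (Fin n → ℝ) → ℝ) :
    EE F U (fun x => ind S α x * g x) = 0 := by
  have h1 := EE_ind F h hU α
  rw [h0] at h1
  unfold EE at h1 ⊢
  rw [Finset.sum_eq_zero_iff_of_nonneg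
    (fun z _ => mul_nonneg (F.nonneg U hU z) (ind_nonneg _ _ _))] at h1
  refine Finset.sum_eq_zero fun z hz => ?_
  rw [← mul_assoc, h1 z hz, zero_mul]

lemma condExp1_eq {n k : ℕ} (F : SAFamily n k) {S U : Finset (Fin n)} (i : Fin n)
    (h : S ∪ {i} ⊆ U) (hU : U.card ≤ k) (α : Asg S) :
    EE F U (fun x => ind S α x * x i) = F.μ S α * condExp1 F S α i := by
  have hS : S ⊆ U := Finset.subset_union_left.trans h
  by_cases h0 : F.μ S α = 0
  · rw [EE_ind_zero F hS hU α h0, h0, zero_mul]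
  · unfold condExp1
    rw [mul_div_cancel₀ _ h0]
    rw [EE_mono F h hU (((dep_ind S α).mono Finset.subset_union_left).mul
      (dep_coord (by simp)))]
    unfold EE
    refine Finset.sum_congr rfl fun z _ => ?_
    beta_reduce
    rw [ind_extU Finset.subset_union_left z α]
    split_ifs <;> simp [extU]

lemma condExp2_eq {n k : ℕ} (F : SAFamily n k) {S U : Finset (Fin n)} (i j : Fin n)
    (h : S ∪ {i, j} ⊆ U) (hU : U.card ≤ k) (α : Asg S) :
    EE F U (fun x => ind S α x * (x i * x j)) = F.μ S α * condExp2 F S α i j := by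
  have hS : S ⊆ U := Finset.subset_union_left.trans h
  by_cases h0 : F.μ S α = 0
  · rw [EE_ind_zero F hS hU α h0, h0, zero_mul]
  · unfold condExp2
    rw [mul_div_cancel₀ _ h0]
    rw [EE_mono F h hU (((dep_ind S α).mono Finset.subset_union_left).mul
      ((dep_coord (by simp)).mul (dep_coord (by simp))))]
    unfold EE
    refine Finset.sum_congr rfl fun z _ => ?_
    beta_reduce
    rw [ind_extU Finset.subset_union_left z α]
    split_ifs <;> simp [extU, mul_assoc]

lemma sum_ind {n : ℕ} {S U : Finset (Fin n)} (h : S ⊆ U) (z : Asg U) (f : Asg S → ℝ) :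
    ∑ α, f α * ind S α (extU U z) = f (res h z) := by
  simp [ind_extU h]

/-- The conditional expectation function. -/
def fcond {n k : ℕ} (F : SAFamily n k) (S : Finset (Fin n)) (i : Fin n) (x : Fin n → ℝ) : ℝ :=
  ∑ α, condExp1 F S α i * ind S α x

lemma dep_fcond {n k : ℕ} (F : SAFamily n k) (S : Finset (Fin n)) (i : Fin n) :
    DepOn S (fcond F S i) := DepOn.sum _ fun α => (dep_ind S α).smul _

/-- Expansion of a function of the `S`-coordinates. -/
lemma dep_expand {n : ℕ} {S U : Finset (Fin n)} (h : S ⊆ U) {g : (Fin n → ℝ) → ℝ}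
    (hg : DepOn S g) (z : Asg U) :
    g (extU U z) = ∑ α, g (extU S α) * ind S α (extU U z) := by
  rw [sum_ind h z (fun α => g (extU S α)), hg _ _ (res_extU h z)]

lemma fcond_ext {n k : ℕ} (F : SAFamily n k) (S : Finset (Fin n)) (i : Fin n) (α : Asg S) :
    fcond F S i (extU S α) = condExp1 F S α i :=
  sum_ind (Finset.Subset.refl S) α (fun β => condExp1 F S β i)

/-- For `h` a function of `x_S`, `E[h * x_i] = E[h * E[x_i|x_S]]`. -/
lemma EE_cond {n k : ℕ} (F : SAFamily n k) {S U : Finset (Fin n)} (i : Fin n)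
    (h : S ∪ {i} ⊆ U) (hU : U.card ≤ k) {g : (Fin n → ℝ) → ℝ} (hg : DepOn S g) :
    EE F U (fun x => g x * x i) = ∑ α, F.μ S α * (g (extU S α) * condExp1 F S α i) := by
  have hS : S ⊆ U := Finset.subset_union_left.trans h
  rw [EE_congr F U (g := fun x => ∑ α, g (extU S α) * (ind S α x * x i))
    (fun z => by rw [dep_expand hS hg z, Finset.sum_mul]
                 exact Finset.sum_congr rfl fun _ _ => by ring), EE_sum]
  refine Finset.sum_congr rfl fun α _ => ?_
  rw [EE_smul, condExp1_eq F i h hU]; ring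

lemma EE_dep {n k : ℕ} (F : SAFamily n k) {S U : Finset (Fin n)}
    (hS : S ⊆ U) (hU : U.card ≤ k) {g : (Fin n → ℝ) → ℝ} (hg : DepOn S g) :
    EE F U g = ∑ α, F.μ S α * g (extU S α) := by
  rw [EE_mono F hS hU hg]; rfl

lemma EE_orth {n k : ℕ} (F : SAFamily n k) {S U : Finset (Fin n)} (i : Fin n)
    (h : S ∪ {i} ⊆ U) (hU : U.card ≤ k) {g : (Fin n → ℝ) → ℝ} (hg : DepOn S g) :
    EE F U (fun x => g x * (x i - fcond F S i x)) = 0 := by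
  have hS : S ⊆ U := Finset.subset_union_left.trans h
  simp_rw [mul_sub]
  rw [EE_sub, EE_cond F i h hU hg, EE_dep F hS hU (hg.mul (dep_fcond F S i))]
  simp [fcond_ext]

/-- Moments formula for the conditional covariance. -/
lemma condCov_eq {n k : ℕ} (F : SAFamily n k) {S U : Finset (Fin n)} (i j : Fin n)
    (h : S ∪ {i, j} ⊆ U) (hU : U.card ≤ k) :
    condCov F S i j = EE F U (fun x => x i * x j)
      - ∑ α, F.μ S α * (condExp1 F S α i * condExp1 F S α j) := by
  have hS : S ⊆ U := Finset.subset_union_left.trans h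
  unfold condCov
  simp_rw [mul_sub]
  rw [Finset.sum_sub_distrib]
  congr 1
  rw [EE_congr F U (g := fun x => ∑ α, ind S α x * (x i * x j))
    (fun z => by
      rw [← Finset.sum_mul]
      have := sum_ind hS z (fun _ => 1)
      simp only [one_mul] at this
      rw [this, one_mul]), EE_sum]
  exact Finset.sum_congr rfl fun α _ => (condExp2_eq F i j h hU α).symm

lemma condCov_eq' {n k : ℕ} (F : SAFamily n k) {S U : Finset (Fin n)} (i j : Fin n)
    (h : S ∪ {i, j} ⊆ U) (hU : U.card ≤ k) :
    condCov F S i j = EE F U (fun x => (x i - fcond F S i x) * (x j - fcond F S j x)) := by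
  have hS : S ⊆ U := Finset.subset_union_left.trans h
  have hi : S ∪ {i} ⊆ U := by
    refine subset_trans (Finset.union_subset_union_right ?_) h; simp
  have hj : S ∪ {j} ⊆ U := by
    refine subset_trans (Finset.union_subset_union_right ?_) h; simp
  have e : (fun x : Fin n → ℝ => (x i - fcond F S i x) * (x j - fcond F S j x))
      = fun x => (x i * x j - fcond F S j x * x i) - fcond F S i x * (x j - fcond F S j x) := by
    funext x; ring
  rw [e, EE_sub, EE_sub, EE_orth F j hj hU (dep_fcond F S i), EE_cond F i hi hU (dep_fcond F S j),
    condCov_eq F i j h hU, sub_zero]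
  congr 1
  refine Finset.sum_congr rfl fun α _ => ?_
  rw [fcond_ext]; ring

lemma condCov_self_nonneg {n k : ℕ} (F : SAFamily n k) {S : Finset (Fin n)} (i : Fin n)
    (hU : (S ∪ {i, i}).card ≤ k) : 0 ≤ condCov F S i i := by
  rw [condCov_eq' F i i (Finset.Subset.refl _) hU]
  exact EE_nonneg _ _ hU _ fun x => mul_self_nonneg _

lemma condCov_self_le {n k : ℕ} (F : SAFamily n k) {S : Finset (Fin n)} (i : Fin n)
    (hU : (S ∪ {i, i}).card ≤ k) : condCov F S i i ≤ 1 := by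
  rw [condCov_eq F i i (Finset.Subset.refl _) hU]
  rw [EE_congr F _ (g := fun _ => 1) (fun z => extU_sq _ z i), EE_one F _ hU]
  have : 0 ≤ ∑ α, F.μ S α * (condExp1 F S α i * condExp1 F S α i) :=
    Finset.sum_nonneg fun α _ => mul_nonneg
      (F.nonneg S ((Finset.card_le_card Finset.subset_union_left).trans hU) α) (mul_self_nonneg _)
  linarith

lemma condCov_drop {n k : ℕ} (F : SAFamily n k) {S : Finset (Fin n)} (i j : Fin n)
    (hc : S.card + 2 ≤ k) :
    condCov F (insert j S) i i ≤ condCov F S i i - condCov F S i j ^ 2 := by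
  set U : Finset (Fin n) := S ∪ {i, j} with hUdef
  have hU : U.card ≤ k := by
    refine (Finset.card_union_le _ _).trans ?_
    have := Finset.card_le_two (a := i) (b := j)
    omega
  have hij : S ∪ {i, j} ⊆ U := Finset.Subset.refl _
  have hii : S ∪ {i, i} ⊆ U := by intro a; simp [hUdef]; tauto
  have hjj : S ∪ {j, j} ⊆ U := by intro a; simp [hUdef]; tauto
  have hii' : insert j S ∪ {i, i} ⊆ U := by intro a; simp [hUdef]; tauto
  have hi' : insert j S ∪ {i} ⊆ U := by intro a; simp [hUdef]; tauto
  have hjle : condCov F S j j ≤ 1 := condCov_self_le F j ((Finset.card_le_card hjj).trans hU)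
  set b := condCov F S i j with hb
  set hfun : (Fin n → ℝ) → ℝ := fun x => fcond F S i x + b * (x j - fcond F S j x) with hh
  have hdep : DepOn (insert j S) hfun :=
    ((dep_fcond F S i).mono (Finset.subset_insert _ _)).add
      (((dep_coord (by simp)).sub ((dep_fcond F S j).mono (Finset.subset_insert _ _))).smul b)
  have key1 : EE F U (fun x => (x i - hfun x) * (x i - hfun x))
      = condCov F S i i - 2 * b * b + b ^ 2 * condCov F S j j := by
    have e : (fun x : Fin n → ℝ => (x i - hfun x) * (x i - hfun x)) = fun x =>
        ((x i - fcond F S i x) * (x i - fcond F S i x)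
          - 2 * b * ((x i - fcond F S i x) * (x j - fcond F S j x)))
          + b ^ 2 * ((x j - fcond F S j x) * (x j - fcond F S j x)) := by
      funext x; simp only [hh]; ring
    rw [e, EE_add, EE_sub, EE_smul, EE_smul, ← condCov_eq' F i i hii hU,
      ← condCov_eq' F i j hij hU, ← condCov_eq' F j j hjj hU]
  have key2 : EE F U (fun x => (x i - hfun x) * (x i - hfun x))
      ≥ condCov F (insert j S) i i := by
    have e : (fun x : Fin n → ℝ => (x i - hfun x) * (x i - hfun x)) = fun x =>
        ((x i - fcond F (insert j S) i x) * (x i - fcond F (insert j S) i x)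
          + 2 * ((fcond F (insert j S) i x - hfun x) * (x i - fcond F (insert j S) i x)))
          + (fcond F (insert j S) i x - hfun x) * (fcond F (insert j S) i x - hfun x) := by
      funext x; ring
    rw [e, EE_add, EE_add, EE_smul, ← condCov_eq' F i i hii' hU,
      EE_orth F i hi' hU ((dep_fcond F _ i).sub hdep)]
    have := EE_nonneg F U hU (fun x => (fcond F (insert j S) i x - hfun x) *
      (fcond F (insert j S) i x - hfun x)) (fun x => mul_self_nonneg _)
    linarith
  nlinarith [sq_nonneg b]

/-! ### Gram representation from the Lasserre vectors -/

/-- Linear combination of Lasserre vectors. -/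
def comb {n k : ℕ} (L : LasserreSol n k) (S : Finset (Fin n)) (f : Asg S → ℝ) :
    EuclideanSpace ℝ (Fin L.dim) := ∑ α, f α • L.vec S α

lemma inner_comb {n k : ℕ} (L : LasserreSol n k) (S T U : Finset (Fin n)) (f : Asg S → ℝ)
    (g : Asg T → ℝ) (h : S ∪ T ⊆ U) (hU : U.card ≤ k) :
    ⟪comb L S f, comb L T g⟫ = EE L.toSAFamily U
      (fun x => (∑ α, f α * ind S α x) * (∑ β, g β * ind T β x)) := by
  have hst : (S ∪ T).card ≤ k := (Finset.card_le_card h).trans hU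
  have e : (fun x => (∑ α, f α * ind S α x) * (∑ β, g β * ind T β x))
      = fun x => ∑ α, ∑ β, (f α * g β) * (ind S α x * ind T β x) := by
    funext x
    rw [Finset.sum_mul_sum]
    exact Finset.sum_congr rfl fun α _ => Finset.sum_congr rfl fun β _ => by ring
  rw [e, EE_sum]
  unfold comb
  rw [sum_inner]
  refine Finset.sum_congr rfl fun α _ => ?_
  rw [inner_sum, EE_sum]
  refine Finset.sum_congr rfl fun β _ => ?_
  rw [EE_smul, real_inner_smul_left, real_inner_smul_right, L.inner_eq S T hst, ← mul_assoc,
    EE_mono L.toSAFamily h hU (((dep_ind S α).mono Finset.subset_union_left).mul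
      ((dep_ind T β).mono Finset.subset_union_right))]
  congr 1
  unfold EE
  refine Finset.sum_congr rfl fun z _ => ?_
  beta_reduce
  rw [ind_extU Finset.subset_union_left z α, ind_extU Finset.subset_union_right z β]
  split_ifs <;> simp_all

/-- Coordinate coefficients. -/
def cco {n : ℕ} (i : Fin n) (γ : Asg ({i} : Finset (Fin n))) : ℝ := γ ⟨i, by simp⟩

/-- The residual vectors. -/
def pvec {n k : ℕ} (L : LasserreSol n k) (S : Finset (Fin n)) (i : Fin n) :
    EuclideanSpace ℝ (Fin L.dim) :=
  comb L {i} (cco i) - comb L S (fun α => condExp1 L.toSAFamily S α i)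

lemma condCov_gram {n k : ℕ} (L : LasserreSol n k) (S : Finset (Fin n)) (hc : S.card + 2 ≤ k)
    (i j : Fin n) : condCov L.toSAFamily S i j = ⟪pvec L S i, pvec L S j⟫ := by
  set U : Finset (Fin n) := S ∪ {i, j} with hUdef
  have hU : U.card ≤ k := by
    refine (Finset.card_union_le _ _).trans ?_
    have := Finset.card_le_two (a := i) (b := j)
    omega
  have hi : {i} ⊆ U := by intro a; simp [hUdef]; tauto
  have hj : {j} ⊆ U := by intro a; simp [hUdef]; tauto
  have hS : S ⊆ U := Finset.subset_union_left
  rw [condCov_eq' L.toSAFamily i j (Finset.Subset.refl _) hU]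
  unfold pvec
  rw [inner_sub_left, inner_sub_right, inner_sub_right,
    inner_comb L _ _ U _ _ (Finset.union_subset hi hj) hU,
    inner_comb L _ _ U _ _ (Finset.union_subset hi hS) hU,
    inner_comb L _ _ U _ _ (Finset.union_subset hS hj) hU,
    inner_comb L _ _ U _ _ (Finset.union_subset hS hS) hU,
    ← EE_sub, ← EE_sub, ← EE_sub]
  apply EE_congr
  intro z
  beta_reduce
  rw [sum_ind hi z (cco i), sum_ind hj z (cco j)]
  have h1 : cco i (res hi z) = extU U z i := by
    simp [cco, res, extU, hi (Finset.mem_singleton_self i)]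
  have h2 : cco j (res hj z) = extU U z j := by
    simp [cco, res, extU, hj (Finset.mem_singleton_self j)]
  rw [h1, h2]
  unfold fcond
  ring

/-! ### Spectral lemma -/

lemma herm_entry {n : ℕ} {A : Matrix (Fin n) (Fin n) ℝ} (hA : A.IsHermitian) (i j : Fin n) :
    A i j = ∑ k, hA.eigenvalues k * (hA.eigenvectorBasis k i * hA.eigenvectorBasis k j) := by
  conv_lhs => rw [hA.spectral_theorem, Unitary.conjStarAlgAut_apply]
  rw [Matrix.mul_apply]
  refine Finset.sum_congr rfl fun k _ => ?_
  rw [Matrix.mul_diagonal]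
  simp [Matrix.star_apply, Matrix.IsHermitian.eigenvectorUnitary_apply]
  ring

lemma basis_complete {n : ℕ} {A : Matrix (Fin n) (Fin n) ℝ} (hA : A.IsHermitian) (i j : Fin n) :
    ∑ k, hA.eigenvectorBasis k i * hA.eigenvectorBasis k j = if i = j then 1 else 0 := by
  have := hA.eigenvectorBasis.sum_inner_mul_inner (EuclideanSpace.single i (1 : ℝ))
    (EuclideanSpace.single j (1 : ℝ))
  rw [show (if i = j then (1 : ℝ) else 0) = if j = i then 1 else 0 by simp [eq_comm]]
  simpa [EuclideanSpace.inner_single_left, EuclideanSpace.inner_single_right,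
    Pi.single_apply] using this

lemma basis_norm {n : ℕ} {A : Matrix (Fin n) (Fin n) ℝ} (hA : A.IsHermitian) (k : Fin n) :
    ∑ i, hA.eigenvectorBasis k i ^ 2 = 1 := by
  have h := hA.eigenvectorBasis.orthonormal.1 k
  have h2 := EuclideanSpace.norm_sq_eq (hA.eigenvectorBasis k)
  rw [h] at h2
  simpa using h2.symm

lemma eig_le_one {n : ℕ} {A : Matrix (Fin n) (Fin n) ℝ} (hA : A.IsHermitian)
    (hpos : ∀ i j, 0 ≤ A i j) (hsum : ∀ i, ∑ j, A i j = 1) (k : Fin n) :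
    hA.eigenvalues k ≤ 1 := by
  set u := hA.eigenvectorBasis k with hu
  have hsym : ∀ i j, A i j = A j i := fun i j => by
    have := hA.apply i j; simpa using this.symm
  have h1 : ∀ i, ∑ j, A i j * u j = hA.eigenvalues k * u i := by
    intro i
    have := congrFun (hA.mulVec_eigenvectorBasis k) i
    simpa [Matrix.mulVec, dotProduct] using this
  have hn := basis_norm hA k
  have h2 : hA.eigenvalues k = ∑ i, ∑ j, A i j * (u i * u j) := by
    calc hA.eigenvalues k = hA.eigenvalues k * ∑ i, u i ^ 2 := by rw [hn, mul_one]
      _ = ∑ i, u i * ∑ j, A i j * u j := by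
        rw [Finset.mul_sum]
        exact Finset.sum_congr rfl fun i _ => by rw [h1]; ring
      _ = _ := by
        refine Finset.sum_congr rfl fun i _ => ?_
        rw [Finset.mul_sum]
        exact Finset.sum_congr rfl fun j _ => by ring
  rw [h2]
  calc ∑ i, ∑ j, A i j * (u i * u j)
      ≤ ∑ i, ∑ j, (A i j * (u i ^ 2 / 2) + A i j * (u j ^ 2 / 2)) := by
        gcongr with i _ j _
        rw [← mul_add]
        exact mul_le_mul_of_nonneg_left (by nlinarith [sq_nonneg (u i - u j)]) (hpos i j)
    _ = ∑ i, ∑ j, A i j * (u i ^ 2 / 2) + ∑ j, ∑ i, A i j * (u j ^ 2 / 2) := by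
        simp_rw [Finset.sum_add_distrib]
        congr 1
        rw [Finset.sum_comm]
    _ = ∑ i, u i ^ 2 / 2 + ∑ j, u j ^ 2 / 2 := by
        congr 1
        · exact Finset.sum_congr rfl fun i _ => by rw [← Finset.sum_mul, hsum, one_mul]
        · exact Finset.sum_congr rfl fun j _ => by
            rw [← Finset.sum_mul, Finset.sum_congr rfl fun i _ => hsym i j, hsum, one_mul]
    _ = 1 := by rw [← Finset.sum_div, hn]; norm_num

/-- Nonnegativity of the quadratic form of the entrywise square of a Gram matrix. -/
lemma gram_sq_nonneg {n d : ℕ} (p : Fin n → Fin d → ℝ) (u : Fin n → ℝ) :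
    0 ≤ ∑ i, ∑ j, (u i * u j) * (∑ a, p i a * p j a) ^ 2 := by
  have : ∑ i, ∑ j, (u i * u j) * (∑ a, p i a * p j a) ^ 2
      = ∑ a, ∑ b, (∑ i, u i * (p i a * p i b)) ^ 2 := by
    have h1 : ∀ i j, (u i * u j) * (∑ a, p i a * p j a) ^ 2
        = ∑ a, ∑ b, (u i * (p i a * p i b)) * (u j * (p j a * p j b)) := by
      intro i j
      rw [sq, Finset.sum_mul_sum, Finset.mul_sum]
      refine Finset.sum_congr rfl fun a _ => ?_
      rw [Finset.mul_sum]
      exact Finset.sum_congr rfl fun b _ => by ring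
    simp_rw [h1, sq, Finset.sum_mul_sum]
    calc _ = ∑ i, ∑ a, ∑ j, ∑ b, (u i * (p i a * p i b)) * (u j * (p j a * p j b)) :=
          Finset.sum_congr rfl fun i _ => Finset.sum_comm
      _ = ∑ a, ∑ i, ∑ j, ∑ b, (u i * (p i a * p i b)) * (u j * (p j a * p j b)) :=
          Finset.sum_comm
      _ = ∑ a, ∑ i, ∑ b, ∑ j, (u i * (p i a * p i b)) * (u j * (p j a * p j b)) :=
          Finset.sum_congr rfl fun a _ => Finset.sum_congr rfl fun i _ => Finset.sum_comm
      _ = _ := Finset.sum_congr rfl fun a _ => Finset.sum_comm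
  rw [this]
  exact Finset.sum_nonneg fun a _ => Finset.sum_nonneg fun b _ => sq_nonneg _

/-- Local-to-global correlation on low threshold rank matrices. -/
lemma local_to_global {n d : ℕ} (hn : 1 ≤ n) {A : Matrix (Fin n) (Fin n) ℝ} (hA : A.IsHermitian)
    (hpos : ∀ i j, 0 ≤ A i j) (hsum : ∀ i, ∑ j, A i j = 1)
    (p : Fin n → Fin d → ℝ) (C : Fin n → Fin n → ℝ) (hC : ∀ i j, C i j = ∑ a, p i a * p j a)
    (hC1 : ∀ i, C i i ≤ 1) (τ : ℝ) (hτ : 0 ≤ τ) :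
    (∑ i, ∑ j, A i j * |C i j|) ^ 2 ≤
      (τ * n + (thresholdRank hA τ : ℝ) / n * ∑ i, ∑ j, C i j ^ 2) * (2 * n) := by
  have hn0 : (0 : ℝ) < n := by exact_mod_cast hn
  set T : Finset (Fin n) := Finset.univ.filter (fun k => τ ≤ hA.eigenvalues k) with hT
  set r : ℝ := (thresholdRank hA τ : ℝ) with hr
  have hrT : r = (T.card : ℝ) := rfl
  have hr0 : 0 ≤ r := by rw [hrT]; positivity
  set u : Fin n → Fin n → ℝ := fun k i => hA.eigenvectorBasis k i with hu
  set P : Fin n → ℝ := fun i => ∑ k ∈ T, u k i ^ 2 with hP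
  have hP0 : ∀ i, 0 ≤ P i := fun i => Finset.sum_nonneg fun k _ => sq_nonneg _
  have hPsum : ∑ i, P i = r := by
    simp only [hP]
    rw [Finset.sum_comm, Finset.sum_congr rfl fun k _ => basis_norm hA k]
    simp [hrT]
  set w : Fin n → ℝ := fun i => Real.sqrt (1 + n / r * P i) with hw
  have hq0 : ∀ i, 0 ≤ n / r * P i := fun i => mul_nonneg (div_nonneg hn0.le hr0) (hP0 i)
  have hw2 : ∀ i, w i ^ 2 = 1 + n / r * P i := fun i =>
    Real.sq_sqrt (by have := hq0 i; linarith)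
  have hw1 : ∀ i, 1 ≤ w i := fun i => Real.one_le_sqrt.mpr (by have := hq0 i; linarith)
  have hwpos : ∀ i, 0 < w i := fun i => lt_of_lt_of_le one_pos (hw1 i)
  have hPw : ∀ i, P i ≤ r / n * w i ^ 2 := by
    intro i
    rw [hw2]
    rcases hr0.eq_or_lt with h | h
    · have : T = ∅ := by
        rw [← Finset.card_eq_zero]; rw [hrT] at h; exact_mod_cast h.symm
      simp [hP, this, ← h]
    · have : r / n * (1 + n / r * P i) = r / n + P i := by field_simp
      rw [this]; have : 0 ≤ r / n := by positivity
      linarith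
  have hwsum : ∑ i, w i ^ 2 ≤ 2 * n := by
    simp_rw [hw2]
    rw [Finset.sum_add_distrib, ← Finset.mul_sum, hPsum]
    have : (n : ℝ) / r * r ≤ n := by
      rcases hr0.eq_or_lt with h | h
      · rw [← h]; simp
      · rw [div_mul_cancel₀ _ h.ne']
    simp; linarith
  -- symmetric
  have hsym : ∀ i j, A i j = A j i := fun i j => by
    have := hA.apply i j; simpa using this.symm
  -- the modified matrix
  set M : Fin n → Fin n → ℝ := fun i j => C i j ^ 2 / (w i * w j) with hM
  have hM0 : ∀ i j, 0 ≤ M i j := fun i j =>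
    div_nonneg (sq_nonneg _) (mul_pos (hwpos i) (hwpos j)).le
  have hAw : ∑ i, ∑ j, A i j * (w i * w j) ≤ 2 * n := by
    refine le_trans ?_ hwsum
    calc ∑ i, ∑ j, A i j * (w i * w j)
        ≤ ∑ i, ∑ j, (A i j * (w i ^ 2 / 2) + A i j * (w j ^ 2 / 2)) := by
          gcongr with i _ j _
          rw [← mul_add]
          exact mul_le_mul_of_nonneg_left (by nlinarith [sq_nonneg (w i - w j)]) (hpos i j)
      _ = ∑ i, ∑ j, A i j * (w i ^ 2 / 2) + ∑ j, ∑ i, A i j * (w j ^ 2 / 2) := by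
          simp_rw [Finset.sum_add_distrib]
          congr 1
          rw [Finset.sum_comm]
      _ = ∑ i, w i ^ 2 / 2 + ∑ j, w j ^ 2 / 2 := by
          congr 1
          · exact Finset.sum_congr rfl fun i _ => by rw [← Finset.sum_mul, hsum, one_mul]
          · exact Finset.sum_congr rfl fun j _ => by
              rw [← Finset.sum_mul, Finset.sum_congr rfl fun i _ => hsym i j, hsum, one_mul]
      _ = ∑ i, w i ^ 2 := by rw [← Finset.sum_div]; ring
  -- Cauchy-Schwarz
  have hCS : (∑ i, ∑ j, A i j * |C i j|) ^ 2 ≤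
      (∑ i, ∑ j, A i j * M i j) * ∑ i, ∑ j, A i j * (w i * w j) := by
    simp_rw [← Finset.sum_product']
    refine Finset.sum_sq_le_sum_mul_sum_of_sq_le_mul _ (fun x _ => mul_nonneg (hpos _ _) (hM0 _ _))
      (fun x _ => mul_nonneg (hpos _ _) (mul_pos (hwpos _) (hwpos _)).le) (fun x _ => ?_)
    apply le_of_eq
    rw [mul_pow, sq_abs]
    simp only [hM]
    have := hwpos x.1
    have := hwpos x.2
    field_simp
  -- spectral bound
  set q : Fin n → ℝ := fun k => ∑ i, ∑ j, (u k i * u k j) * M i j with hq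
  have hqnn : ∀ k, 0 ≤ q k := by
    intro k
    have := gram_sq_nonneg p (fun i => u k i / w i)
    convert this using 1
    refine Finset.sum_congr rfl fun i _ => Finset.sum_congr rfl fun j _ => ?_
    rw [← hC]
    simp only [hM]
    have := hwpos i
    have := hwpos j
    field_simp
  have hAM : ∑ i, ∑ j, A i j * M i j = ∑ k, hA.eigenvalues k * q k := by
    simp only [hq, Finset.mul_sum]
    rw [Finset.sum_comm' (t' := Finset.univ) (s' := fun _ => Finset.univ) (by simp)]
    conv_rhs => rw [Finset.sum_comm]
    rw [Finset.sum_comm]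
    refine Finset.sum_congr rfl fun i _ => ?_
    rw [Finset.sum_comm]
    refine Finset.sum_congr rfl fun j _ => ?_
    rw [herm_entry hA i j, Finset.sum_mul]
    exact Finset.sum_congr rfl fun k _ => by simp only [hu]; ring
  have hqsum : ∑ k, q k ≤ n := by
    have : ∑ k, q k = ∑ i, M i i := by
      simp only [hq]
      rw [Finset.sum_comm]
      refine Finset.sum_congr rfl fun i _ => ?_
      rw [Finset.sum_comm]
      have : ∀ j, ∑ k, u k i * u k j * M i j = if i = j then M i j else 0 := by
        intro j
        rw [← Finset.sum_mul]
        simp only [hu]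
        rw [basis_complete hA i j]; split_ifs <;> simp
      simp [this]
    rw [this]
    calc ∑ i, M i i ≤ ∑ i : Fin n, (1 : ℝ) := by
          gcongr with i _
          simp only [hM]
          have h0 : 0 ≤ C i i := by
            rw [hC]; exact Finset.sum_nonneg fun a _ => mul_self_nonneg _
          have := hC1 i
          have := hw1 i
          rw [div_le_one (mul_pos (hwpos i) (hwpos i))]
          nlinarith
      _ = n := by simp
  have hqT : ∑ k ∈ T, q k ≤ r / n * ∑ i, ∑ j, C i j ^ 2 := by
    have : ∑ k ∈ T, q k = ∑ i, ∑ j, (∑ k ∈ T, u k i * u k j) * M i j := by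
      simp only [hq]
      rw [Finset.sum_comm]
      refine Finset.sum_congr rfl fun i _ => ?_
      rw [Finset.sum_comm]
      exact Finset.sum_congr rfl fun j _ => by rw [Finset.sum_mul]
    rw [this, Finset.mul_sum]
    refine Finset.sum_le_sum fun i _ => ?_
    rw [Finset.mul_sum]
    refine Finset.sum_le_sum fun j _ => ?_
    have h1 : (∑ k ∈ T, u k i * u k j) ^ 2 ≤ P i * P j :=
      Finset.sum_mul_sq_le_sq_mul_sq T _ _
    have hrn : 0 ≤ r / n := by positivity
    have h2 : ∑ k ∈ T, u k i * u k j ≤ r / n * (w i * w j) := by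
      apply le_of_sq_le_sq _ (mul_nonneg hrn (mul_pos (hwpos i) (hwpos j)).le)
      calc _ ≤ P i * P j := h1
        _ ≤ (r / n * w i ^ 2) * (r / n * w j ^ 2) :=
          mul_le_mul (hPw i) (hPw j) (hP0 j) (by positivity)
        _ = _ := by ring
    calc _ ≤ r / n * (w i * w j) * M i j := mul_le_mul_of_nonneg_right h2 (hM0 i j)
      _ = _ := by
        simp only [hM]
        have := hwpos i
        have := hwpos j
        field_simp
  have hAMle : ∑ i, ∑ j, A i j * M i j ≤ τ * n + r / n * ∑ i, ∑ j, C i j ^ 2 := by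
    rw [hAM]
    calc ∑ k, hA.eigenvalues k * q k ≤ ∑ k, (τ * q k + if τ ≤ hA.eigenvalues k then q k else 0) := by
          refine Finset.sum_le_sum fun k _ => ?_
          have h1 := eig_le_one hA hpos hsum k
          have h2 := hqnn k
          split_ifs with h
          · nlinarith [mul_nonneg hτ h2]
          · push Not at h; nlinarith
      _ = τ * ∑ k, q k + ∑ k ∈ T, q k := by
          rw [Finset.sum_add_distrib, ← Finset.mul_sum, hT, Finset.sum_filter]
      _ ≤ _ := add_le_add (mul_le_mul_of_nonneg_left hqsum hτ) hqT
  have hAM0 : 0 ≤ ∑ i, ∑ j, A i j * M i j :=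
    Finset.sum_nonneg fun i _ => Finset.sum_nonneg fun j _ => mul_nonneg (hpos _ _) (hM0 _ _)
  calc _ ≤ _ := hCS
    _ ≤ (∑ i, ∑ j, A i j * M i j) * (2 * n) := mul_le_mul_of_nonneg_left hAw hAM0
    _ ≤ _ := mul_le_mul_of_nonneg_right hAMle (by positivity)

/-- Correlation rounding on low threshold rank Ising models: there is a universal
`c > 0` such that for any regular Ising model with adjacency matrix `A` and
`t = ⌈rank(cε²)/(cε²)⌉`, any level-`(t+2)` Lasserre solution admits a seed set
`S` of size at most `t` whose conditioning drops the total conditional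
covariance seen by the couplings to at most `ε n J'`. -/
theorem correlation_rounding_low_threshold_rank :
    ∃ c : ℝ, 0 < c ∧
      ∀ n : ℕ, 1 ≤ n → ∀ ε : ℝ, ε ∈ Set.Ioo (0 : ℝ) 1 →
        ∀ J : Fin n → Fin n → ℝ, (∀ i j : Fin n, J i j = J j i) →
        ∀ J' : ℝ, 0 < J' → (∀ i : Fin n, ∑ j : Fin n, |J i j| = J') →
        ∀ A : Matrix (Fin n) (Fin n) ℝ, A = (fun i j : Fin n => |J i j| / J') →
        ∀ hA : A.IsHermitian,
        ∀ t : ℕ, t = ⌈(thresholdRank hA (c * ε ^ 2) : ℝ) / (c * ε ^ 2)⌉₊ →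
        ∀ L : LasserreSol n (t + 2),
          ∃ S : Finset (Fin n), S.card ≤ t ∧
            |∑ i : Fin n, ∑ j : Fin n, J i j * condCov L.toSAFamily S i j|
              ≤ ε * n * J' := by
  refine ⟨1 / 8, by norm_num, ?_⟩
  intro n hn ε hε J hJ J' hJ' hreg A hAdef hA t ht L
  obtain ⟨hε0, hε1⟩ := hε
  have hn0 : (0 : ℝ) < n := by exact_mod_cast hn
  by_contra hcon
  push Not at hcon
  set F := L.toSAFamily with hF
  set τ : ℝ := 1 / 8 * ε ^ 2 with hτ
  have hτ0 : 0 < τ := by positivity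
  set r : ℝ := (thresholdRank hA τ : ℝ) with hr
  have hr0 : 0 ≤ r := by simp [hr]
  have hAij : ∀ i j, A i j = |J i j| / J' := fun i j => by rw [hAdef]
  have hpos : ∀ i j, 0 ≤ A i j := fun i j => by rw [hAij]; positivity
  have hsum : ∀ i, ∑ j, A i j = 1 := fun i => by
    simp_rw [hAij]
    rw [← Finset.sum_div, hreg, div_self hJ'.ne']
  have hpair : ∀ (S : Finset (Fin n)) (i : Fin n), S.card ≤ t → (S ∪ {i, i}).card ≤ t + 2 := by
    intro S i hS
    refine (Finset.card_union_le _ _).trans ?_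
    have := Finset.card_le_two (a := i) (b := i)
    omega
  -- global correlation of every seed set
  have hglob : ∀ S : Finset (Fin n), S.card ≤ t →
      3 / 8 * ε ^ 2 * n ^ 2 < r * ∑ i, ∑ j, condCov F S i j ^ 2 := by
    intro S hS
    have h1 := hcon S hS
    have h2 : |∑ i, ∑ j, J i j * condCov F S i j| ≤ J' * ∑ i, ∑ j, A i j * |condCov F S i j| := by
      rw [Finset.mul_sum]
      refine (Finset.abs_sum_le_sum_abs _ _).trans (Finset.sum_le_sum fun i _ => ?_)
      rw [Finset.mul_sum]
      refine (Finset.abs_sum_le_sum_abs _ _).trans (Finset.sum_le_sum fun j _ => ?_)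
      rw [abs_mul, hAij]
      apply le_of_eq
      field_simp
    have h3 : ε * n < ∑ i, ∑ j, A i j * |condCov F S i j| := by
      have : J' * (ε * n) < J' * ∑ i, ∑ j, A i j * |condCov F S i j| := by linarith
      exact lt_of_mul_lt_mul_left this hJ'.le
    have h4 := local_to_global hn hA hpos hsum (fun i a => pvec L S i a) (condCov F S)
      (fun i j => by
        rw [condCov_gram L S (by omega) i j]
        simp [PiLp.inner_apply, mul_comm])
      (fun i => condCov_self_le F i (hpair S i hS)) τ hτ0.le
    have h5 : (ε * n) ^ 2 < (∑ i, ∑ j, A i j * |condCov F S i j|) ^ 2 :=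
      pow_lt_pow_left₀ h3 (by positivity) (by norm_num)
    have h6 := h5.trans_le h4
    rw [← hr] at h6
    set X := ∑ i, ∑ j, condCov F S i j ^ 2 with hX
    have h7 : (τ * n + r / n * X) * (2 * n) = 2 * τ * n ^ 2 + 2 * (r * X) := by
      field_simp
    rw [h7, hτ] at h6
    nlinarith
  have hrpos : 0 < r := by
    rcases hr0.eq_or_lt with h | h
    · have := hglob ∅ (by simp)
      rw [← h, zero_mul] at this
      have : (0 : ℝ) ≤ 3 / 8 * ε ^ 2 * n ^ 2 := by positivity
      linarith
    · exact h
  set δ : ℝ := 3 / 8 * ε ^ 2 * n / r with hδ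
  have hstep : ∀ m : ℕ, m ≤ t → ∃ S : Finset (Fin n), S.card ≤ m ∧
      ∑ i, condCov F S i i ≤ n - m * δ := by
    intro m
    induction m with
    | zero =>
      intro _
      refine ⟨∅, by simp, ?_⟩
      calc ∑ i, condCov F ∅ i i ≤ ∑ i : Fin n, (1 : ℝ) :=
            Finset.sum_le_sum fun i _ => condCov_self_le F i (hpair ∅ i (by simp))
        _ = _ := by simp
    | succ m ih =>
      intro hm
      obtain ⟨S, hS, hSle⟩ := ih (by omega)
      have hg := hglob S (by omega)
      have hg' : ∑ j : Fin n, δ < ∑ j, ∑ i, condCov F S i j ^ 2 := by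
        rw [Finset.sum_comm]
        simp only [Finset.sum_const, Finset.card_univ, Fintype.card_fin, nsmul_eq_mul]
        rw [hδ, ← mul_div_assoc, div_lt_iff₀ hrpos]
        linarith
      obtain ⟨j, _, hj⟩ := Finset.exists_lt_of_sum_lt hg'
      refine ⟨insert j S, (Finset.card_insert_le _ _).trans (by omega), ?_⟩
      have : ∑ i, condCov F (insert j S) i i ≤ ∑ i, (condCov F S i i - condCov F S i j ^ 2) :=
        Finset.sum_le_sum fun i _ => condCov_drop F i j (by omega)
      rw [Finset.sum_sub_distrib] at this
      push_cast
      linarith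
  obtain ⟨S, hS, hSle⟩ := hstep t le_rfl
  have hnn : 0 ≤ ∑ i, condCov F S i i :=
    Finset.sum_nonneg fun i _ => condCov_self_nonneg F i (hpair S i hS)
  have htge : r / τ ≤ t := by rw [ht]; exact Nat.le_ceil _
  have hδ0 : 0 < δ := by positivity
  have h8 : r / τ * δ ≤ t * δ := mul_le_mul_of_nonneg_right htge hδ0.le
  have h9 : r / τ * δ = 3 * n := by
    rw [hδ, hτ]; field_simp
  linarith
end
end
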